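/- For every ε > 0 there exists c > 0 such that the following holds for all sufficiently large n. Let G be an ordered graph on n vertices containing no induced monotone path P_5. If the complement Ḡ of G contains at least ε·n³ copies of K_3 (triangles), then Ḡ contains the complete bipartite graph K_2[t] with t = ⌈c·n/log n⌉. -/

import Mathlib

/-- The number of `r`-element vertex subsets of `G` inducing a complete subgraph
(copies of `K_r`). -/
noncomputable def cliqueCount {V : Type*} [Fintype V] (G : SimpleGraph V) (r : ℕ) : ℕ :=
  Set.ncard {s : Finset V | s.card = r ∧ G.IsClique (s : Set V)}

/-- `G` contains `K_r[t]`: `r` pairwise disjoint vertex sets of size `t` with all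
pairs of vertices from distinct sets adjacent. -/
def ContainsBlowup {V : Type*} (G : SimpleGraph V) (r t : ℕ) : Prop :=
  ∃ A : Fin r → Finset V,
    (∀ i, (A i).card = t) ∧
    (∀ i j, i ≠ j → Disjoint (A i) (A j)) ∧
    (∀ i j, i ≠ j → ∀ x ∈ A i, ∀ y ∈ A j, G.Adj x y)

/-- The ordered graph `G` on `Fin n` contains an induced monotone path with `m`
vertices: `v 0 < v 1 < ⋯ < v (m-1)` with adjacency exactly between consecutive
vertices. -/
def HasIndMonPath {n : ℕ} (G : SimpleGraph (Fin n)) (m : ℕ) : Prop :=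
  ∃ v : Fin m → Fin n, StrictMono v ∧
    ∀ i j : Fin m, G.Adj (v i) (v j) ↔ ((i : ℕ) + 1 = (j : ℕ) ∨ (j : ℕ) + 1 = (i : ℕ))

/-!
If `Gᶜ` has no `K_2[t]`, then any two consecutive sets of `t` vertices are joined by an edge of `G`.
Hence what a set reaches by increasing paths misses fewer than `t` later vertices, and halving the
set about `log n` times shows that every set of size `σ ≈ t log n` contains a single vertex reaching
all but `O(σ)` of any later set.

When `G` has no induced monotone path on five vertices, let `u < x` be adjacent and let `v > x` be
a neighbour of `x` but not of `u`. Then `v` is adjacent to everything it reaches while avoiding the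
neighbours of `u` and of `x`, as an induced path of this kind would otherwise extend `u, x, v`.
Given `σ` such `v`, the reachability bound provides one for which `u`, `x` and `v` have almost no
common non-neighbours in a later set. In particular, there are no three consecutive, pairwise sparse
sets of size a large multiple of `σ`.

Such sets are found as follows. With `ε n³` independent triples, cutting the order at two points
gives consecutive sets `A, B, C` of linear size with a positive proportion of independent triples.
Dependent random choice on the common non-neighbourhoods of vertices of `C` passes to subsets of `A`
and `B` in which almost all pairs and triples have many common non-neighbours in `C`. A typical `v`
in `B` is then the end of few such paths `u, x, v`, which yields consecutive sparse sets `X` and `Y`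
with many independent triples in `X × Y × C`. Iterating this, also for the reversed order, makes all
three pairs sparse.
-/

namespace OrderedGraph

open Finset

universe u

section Counting

variable {α : Type*}

theorem card_le_card_add_card {s t v : Finset α} (h : ∀ x ∈ s, x ∈ t ∨ x ∈ v) :
    #s ≤ #t + #v := by
  classical
  exact (card_le_card fun x hx => mem_union.2 (h x hx)).trans (card_union_le t v)

theorem card_filter_lt_mul_le_sum (s : Finset α) {f : α → ℝ} (hf : ∀ x ∈ s, 0 ≤ f x) (k : ℝ) :
    #{x ∈ s | k < f x} * k ≤ ∑ x ∈ s, f x := by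
  calc #{x ∈ s | k < f x} * k = ∑ x ∈ s with k < f x, k := by
        rw [sum_const, nsmul_eq_mul]
    _ ≤ ∑ x ∈ s with k < f x, f x := sum_le_sum fun x hx => (mem_filter.1 hx).2.le
    _ ≤ ∑ x ∈ s, f x := sum_le_sum_of_subset_of_nonneg (filter_subset _ _) fun x hx _ => hf x hx

theorem sum_le_card_filter_le_mul_add (s : Finset α) {f : α → ℝ} {a k : ℝ} (hf : ∀ x ∈ s, f x ≤ a)
    (hk : 0 ≤ k) : ∑ x ∈ s, f x ≤ #{x ∈ s | k ≤ f x} * a + #s * k := by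
  rw [← sum_filter_add_sum_filter_not s fun x => k ≤ f x]
  refine add_le_add ?_ ?_
  · rw [← nsmul_eq_mul]
    exact sum_le_card_nsmul _ _ _ fun x hx => hf x (mem_filter.1 hx).1
  · calc ∑ x ∈ s with ¬ k ≤ f x, f x ≤ #{x ∈ s | ¬ k ≤ f x} * k := by
          rw [← nsmul_eq_mul]
          exact sum_le_card_nsmul _ _ _ fun x hx => (not_le.1 (mem_filter.1 hx).2).le
      _ ≤ #s * k := mul_le_mul_of_nonneg_right (Nat.cast_le.2 (card_filter_le _ _)) hk

variable [LinearOrder α]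

theorem exists_card_filter_le_eq (s : Finset α) {k : ℕ} (hk : 0 < k) (hks : k ≤ #s) :
    ∃ p ∈ s, #{x ∈ s | x ≤ p} = k := by
  induction s using Finset.induction_on_max with
  | empty => exact absurd hks (by simpa using hk.ne')
  | insert m s hm ih =>
    have hms : m ∉ s := fun h => lt_irrefl m (hm m h)
    rw [card_insert_of_notMem hms] at hks
    rcases hks.lt_or_eq with hlt | rfl
    · obtain ⟨p, hp, hcard⟩ := ih (Nat.lt_succ_iff.1 hlt)
      refine ⟨p, mem_insert_of_mem hp, ?_⟩
      rwa [filter_insert, if_neg (hm p hp).not_ge]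
    · refine ⟨m, mem_insert_self m s, ?_⟩
      rw [filter_true_of_mem, card_insert_of_notMem hms]
      simpa using fun x hx => (hm x hx).le

theorem exists_card_filter_lt_eq (s : Finset α) {k : ℕ} (hk : k < #s) :
    ∃ p, #{x ∈ s | p < x} = k := by
  obtain ⟨p, -, hp⟩ := exists_card_filter_le_eq s (k := #s - k) (by omega) (Nat.sub_le _ _)
  have hsum := card_filter_add_card_filter_not (s := s) (· ≤ p)
  simp only [not_le] at hsum
  exact ⟨p, by omega⟩

theorem exists_card_filter_le_eq_half (s : Finset α) (hs : 2 ≤ #s) :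
    ∃ p, (#s : ℝ) ≤ 2 * #{x ∈ s | x ≤ p} + 1 ∧ (#s : ℝ) ≤ 2 * #{x ∈ s | p < x} := by
  obtain ⟨p, -, hp⟩ := exists_card_filter_le_eq s (k := #s / 2) (by omega) (Nat.div_le_self _ _)
  have hsum := card_filter_add_card_filter_not (s := s) (· ≤ p)
  simp only [not_le] at hsum
  exact ⟨p, by norm_cast; omega, by norm_cast; omega⟩

/-- Every vertex of `X` lies before every vertex of `Y`. -/
def Precedes (X Y : Finset α) : Prop :=
  ∀ ⦃x⦄, x ∈ X → ∀ ⦃y⦄, y ∈ Y → x < y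

theorem Precedes.mono {X X' Y Y' : Finset α} (h : Precedes X Y) (hX : X' ⊆ X) (hY : Y' ⊆ Y) :
    Precedes X' Y' :=
  fun _ hx _ hy => h (hX hx) (hY hy)

theorem Precedes.union_left {X Y Z : Finset α} (hX : Precedes X Z) (hY : Precedes Y Z) :
    Precedes (X ∪ Y) Z :=
  fun _ hx _ hz => (mem_union.1 hx).elim (fun hx => hX hx hz) fun hy => hY hy hz

theorem Precedes.trans {X Y Z : Finset α} (hXY : Precedes X Y) (hYZ : Precedes Y Z)
    (hY : Y.Nonempty) : Precedes X Z :=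
  fun _ hx _ hz => (hXY hx hY.choose_spec).trans (hYZ hY.choose_spec hz)

theorem precedes_filter_le_filter_lt (X Y : Finset α) (p : α) :
    Precedes {x ∈ X | x ≤ p} {y ∈ Y | p < y} :=
  fun _ hx _ hy => (mem_filter.1 hx).2.trans_lt (mem_filter.1 hy).2

end Counting

section Neighbors

variable {V : Type*} (G : SimpleGraph V)

open Classical in
/-- The neighbours of `x` in `Y`. -/
noncomputable def nbrs (Y : Finset V) (x : V) : Finset V := {y ∈ Y | G.Adj x y}

open Classical in
/-- The vertices of `C` adjacent to no vertex of `s`. -/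
noncomputable def commonNonneighbors (C : Finset V) (s : Set V) : Finset V :=
  {w ∈ C | ∀ u ∈ s, ¬ G.Adj u w}

variable {G} {C D : Finset V} {s t : Set V} {v w : V}

theorem mem_nbrs : w ∈ nbrs G C v ↔ w ∈ C ∧ G.Adj v w := by
  classical exact mem_filter

theorem nbrs_subset_nbrs (h : C ⊆ D) : nbrs G C v ⊆ nbrs G D v := by
  classical exact filter_subset_filter _ h

theorem mem_commonNonneighbors :
    w ∈ commonNonneighbors G C s ↔ w ∈ C ∧ ∀ u ∈ s, ¬ G.Adj u w := by
  classical exact mem_filter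

theorem commonNonneighbors_subset : commonNonneighbors G C s ⊆ C := by
  classical exact filter_subset _ _

theorem commonNonneighbors_subset_commonNonneighbors (hC : C ⊆ D) (hst : s ⊆ t) :
    commonNonneighbors G C t ⊆ commonNonneighbors G D s := fun w hw => by
  rw [mem_commonNonneighbors] at hw ⊢
  exact ⟨hC hw.1, fun u hu => hw.2 u (hst hu)⟩

theorem commonNonneighbors_empty : commonNonneighbors G C ∅ = C := by
  ext w
  simp only [mem_commonNonneighbors, Set.mem_empty_iff_false, false_imp_iff, implies_true,
    and_true]

theorem card_commonNonneighbors_le (C : Finset V) (s : Set V) (v : V) :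
    #(commonNonneighbors G C s) ≤ #(commonNonneighbors G C (insert v s)) + #(nbrs G C v) := by
  refine card_le_card_add_card fun w hw => ?_
  rw [mem_commonNonneighbors] at hw
  by_cases hvw : G.Adj v w
  · exact .inr (mem_nbrs.2 ⟨hw.1, hvw⟩)
  · exact .inl (mem_commonNonneighbors.2 ⟨hw.1, Set.forall_mem_insert.2 ⟨hvw, hw.2⟩⟩)

theorem card_le_card_commonNonneighbors_singleton (C : Finset V) (v : V) :
    #C ≤ #(commonNonneighbors G C {v}) + #(nbrs G C v) := by
  simpa only [commonNonneighbors_empty, insert_empty_eq] using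
    card_commonNonneighbors_le (G := G) C ∅ v

end Neighbors

section Reachability

variable {V : Type*} [LinearOrder V]

/-- There is an increasing path of `G` from `x` to `y` all of whose vertices after `x` lie in `S`.
The path need not be induced. -/
def Reach (G : SimpleGraph V) (S : Finset V) : V → V → Prop :=
  Relation.TransGen fun a b => a < b ∧ G.Adj a b ∧ b ∈ S

open Classical in
/-- The vertices of `S` that can be reached inside `S` from some vertex of `X`. -/
noncomputable def reached (G : SimpleGraph V) (S : Finset V) (X : Set V) : Finset V :=
  {y ∈ S | ∃ x ∈ X, Reach G S x y}

open Classical in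
/-- The vertices of `S` that cannot be reached inside `S` from any vertex of `X`. -/
noncomputable def unreached (G : SimpleGraph V) (S : Finset V) (X : Set V) : Finset V :=
  {y ∈ S | ∀ x ∈ X, ¬ Reach G S x y}

variable {G : SimpleGraph V} {S T : Finset V} {X Y : Set V} {x y w : V}

theorem mem_reached : y ∈ reached G S X ↔ y ∈ S ∧ ∃ x ∈ X, Reach G S x y := by
  classical exact mem_filter

theorem mem_unreached : y ∈ unreached G S X ↔ y ∈ S ∧ ∀ x ∈ X, ¬ Reach G S x y := by
  classical exact mem_filter

theorem mem_reached_singleton : y ∈ reached G S {x} ↔ y ∈ S ∧ Reach G S x y := by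
  simp only [mem_reached, Set.mem_singleton_iff, exists_eq_left]

theorem mem_unreached_singleton : y ∈ unreached G S {x} ↔ y ∈ S ∧ ¬ Reach G S x y := by
  simp only [mem_unreached, Set.mem_singleton_iff, forall_eq]

theorem mem_reached_or_mem_unreached (hy : y ∈ S) : y ∈ reached G S X ∨ y ∈ unreached G S X := by
  by_cases h : ∃ x ∈ X, Reach G S x y
  · exact .inl (mem_reached.2 ⟨hy, h⟩)
  · exact .inr (mem_unreached.2 ⟨hy, fun x hx hxy => h ⟨x, hx, hxy⟩⟩)

namespace Reach

theorem mem (h : Reach G S x y) : y ∈ S := by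
  cases h with
  | single h => exact h.2.2
  | tail _ h => exact h.2.2

theorem lt (h : Reach G S x y) : x < y := by
  induction h with
  | single h => exact h.1
  | tail _ h ih => exact ih.trans h.1

theorem mono (hST : S ⊆ T) (h : Reach G S x y) : Reach G T x y :=
  Relation.TransGen.mono (fun _ _ h => ⟨h.1, h.2.1, hST h.2.2⟩) _ _ h

/-- The first step of the path is taken to be to its last neighbour of `x`. -/
theorem exists_adj_reach (h : Reach G S x w) (hw : ¬ G.Adj x w) :
    ∃ v ∈ S, x < v ∧ G.Adj x v ∧ Reach G (commonNonneighbors G S {x}) v w := by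
  induction h with
  | single h => exact absurd h.2.1 hw
  | @tail b c hb hc ih =>
    have hcS : c ∈ commonNonneighbors G S {x} :=
      mem_commonNonneighbors.2 ⟨hc.2.2, by simpa only [Set.mem_singleton_iff, forall_eq]⟩
    by_cases hxb : G.Adj x b
    · exact ⟨b, mem hb, lt hb, hxb, .single ⟨hc.1, hc.2.1, hcS⟩⟩
    · obtain ⟨v, hv, hxv, hadj, hvb⟩ := ih hxb
      exact ⟨v, hv, hxv, hadj, .tail hvb ⟨hc.1, hc.2.1, hcS⟩⟩

theorem exists_induced_path (h : Reach G S x w) (hw : ¬ G.Adj x w) :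
    ∃ y ∈ S, ∃ z ∈ S, x < y ∧ y < z ∧ G.Adj x y ∧ G.Adj y z ∧ ¬ G.Adj x z := by
  obtain ⟨y, hy, hxy, hadj, hyw⟩ := h.exists_adj_reach hw
  obtain ⟨z, ⟨hyz, hadj', hz⟩, -⟩ := Relation.TransGen.head'_iff.1 hyw
  rw [mem_commonNonneighbors] at hz
  exact ⟨y, hy, z, hz.1, hxy, hyz, hadj, hadj', hz.2 x rfl⟩

end Reach

theorem mem_reached_nbrs_of_adj {A B : Finset V} {u r : V} (hr : r ∈ reached G A {u})
    (hy : y ∈ commonNonneighbors G B {u}) (hlt : r < y) (hadj : G.Adj r y) :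
    y ∈ reached G (commonNonneighbors G (A ∪ B) {u}) (nbrs G A u) := by
  classical
  have hnon : ∀ b ∈ commonNonneighbors G B {u}, ¬ G.Adj u b := fun b hb =>
    (mem_commonNonneighbors.1 hb).2 u rfl
  have huy : Reach G (A ∪ commonNonneighbors G B {u}) u y :=
    .tail ((mem_reached_singleton.1 hr).2.mono subset_union_left)
      ⟨hlt, hadj, mem_union_right _ hy⟩
  obtain ⟨x, hx, -, hux, hxy⟩ := huy.exists_adj_reach (hnon y hy)
  have hxA : x ∈ A := (mem_union.1 hx).resolve_right fun hxB => hnon x hxB hux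
  have hxy' : Reach G (commonNonneighbors G (A ∪ B) {u}) x y :=
    hxy.mono (commonNonneighbors_subset_commonNonneighbors
      (union_subset_union subset_rfl commonNonneighbors_subset) subset_rfl)
  exact mem_reached.2 ⟨hxy'.mem, x, mem_nbrs.2 ⟨hxA, hux⟩, hxy'⟩

theorem card_commonNonneighbors_pair_le {B T : Finset V} (hB : B ⊆ T) (u x p : V) :
    #(commonNonneighbors G {b ∈ B | p < b} {x, u}) ≤
      #(commonNonneighbors G (reached G (commonNonneighbors G T {u}) {x}) {x}) +
        #{y ∈ unreached G (commonNonneighbors G T {u}) {x} | p < y} := by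
  refine card_le_card_add_card fun y hy => ?_
  simp only [mem_commonNonneighbors (C := {b ∈ B | p < b}), mem_filter, Set.mem_insert_iff,
    Set.mem_singleton_iff, forall_eq_or_imp, forall_eq] at hy
  obtain ⟨⟨hyB, hpy⟩, hxy, huy⟩ := hy
  have hyS : y ∈ commonNonneighbors G T {u} :=
    mem_commonNonneighbors.2 ⟨hB hyB, by simpa only [Set.mem_singleton_iff, forall_eq]⟩
  exact (mem_reached_or_mem_unreached hyS).imp
    (fun hr => mem_commonNonneighbors.2 ⟨hr, by simpa only [Set.mem_singleton_iff, forall_eq]⟩)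
    fun hun => mem_filter.2 ⟨hun, hpy⟩

/-- Any two sets of at least `t` vertices, one of which precedes the other, are joined by an
edge. This holds when the complement of `G` contains no `K_2[t]`. -/
def HoleFree (G : SimpleGraph V) (t : ℕ) : Prop :=
  ∀ ⦃X Y : Finset V⦄, Precedes X Y → t ≤ #X → t ≤ #Y → ∃ x ∈ X, ∃ y ∈ Y, G.Adj x y

namespace HoleFree

variable {t : ℕ} {p q : V}

theorem card_lt (h : HoleFree G t) {X Y : Finset V} (hXY : Precedes X Y) (hX : t ≤ #X)
    (hn : ∀ x ∈ X, ∀ y ∈ Y, ¬ G.Adj x y) : #Y < t := by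
  by_contra! hY
  obtain ⟨x, hx, y, hy, hxy⟩ := h hXY hX hY
  exact hn x hx y hy hxy

theorem card_unreached_lt (h : HoleFree G t) (hX : t ≤ #{y ∈ reached G S X | y ≤ p}) :
    #{y ∈ unreached G S X | p < y} < t := by
  refine h.card_lt (precedes_filter_le_filter_lt _ _ p) hX fun y hy z hz hyz => ?_
  obtain ⟨hy, hyp⟩ := mem_filter.1 hy
  obtain ⟨hz, hpz⟩ := mem_filter.1 hz
  obtain ⟨-, x, hx, hxy⟩ := mem_reached.1 hy
  obtain ⟨hzS, hno⟩ := mem_unreached.1 hz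
  exact hno x hx (.tail hxy ⟨hyp.trans_lt hpz, hyz, hzS⟩)

theorem le_card_reached_or (h : HoleFree G t) (hX : t ≤ #{y ∈ reached G S (X ∪ Y) | y ≤ p})
    (hpq : 3 * t ≤ #{y ∈ S | p < y ∧ y ≤ q}) :
    t ≤ #{y ∈ reached G S X | y ≤ q} ∨ t ≤ #{y ∈ reached G S Y | y ≤ q} := by
  classical
  have hcover : #{y ∈ S | p < y ∧ y ≤ q} ≤ #{y ∈ unreached G S (X ∪ Y) | p < y} +
      #({y ∈ reached G S X | y ≤ q} ∪ {y ∈ reached G S Y | y ≤ q}) := by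
    refine card_le_card_add_card fun y hy => ?_
    simp only [mem_filter, mem_union, mem_reached, mem_unreached, Set.mem_union] at hy ⊢
    grind
  have hunion := card_union_le {y ∈ reached G S X | y ≤ q} {y ∈ reached G S Y | y ≤ q}
  have hun := h.card_unreached_lt hX
  omega

theorem exists_subset_le_card_reached (h : HoleFree G t) {X : Finset V}
    (hX : t ≤ #{y ∈ reached G S X | y ≤ p}) (hpq : 3 * t ≤ #{y ∈ S | p < y ∧ y ≤ q}) :
    ∃ X' ⊆ X, #X' ≤ (#X + 1) / 2 ∧ t ≤ #{y ∈ reached G S X' | y ≤ q} := by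
  classical
  obtain ⟨X₁, hX₁, hc₁⟩ := exists_subset_card_eq (Nat.div_le_self #X 2)
  have hc₂ := card_sdiff_of_subset hX₁
  have hunion : (X : Set V) = ↑X₁ ∪ ↑(X \ X₁) := by
    rw [← coe_union, union_sdiff_of_subset hX₁]
  rcases h.le_card_reached_or (hunion ▸ hX) hpq with hr₁ | hr₂
  · exact ⟨X₁, hX₁, by omega, hr₁⟩
  · exact ⟨X \ X₁, sdiff_subset, by omega, hr₂⟩

/-- Bisect `X`: some half still reaches many vertices of `S`, now within the next `3 * t`. -/
theorem exists_card_unreached_le (h : HoleFree G t) (ht : 1 ≤ t) (S : Finset V) (L : ℕ) :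
    ∀ (X : Finset V) (p : V), #X ≤ 2 ^ L → t ≤ #{y ∈ reached G S X | y ≤ p} →
      ∃ x ∈ X, #{y ∈ unreached G S {x} | p < y} ≤ (3 * L + 1) * t := by
  induction L with
  | zero =>
    intro X p hX hr
    obtain ⟨y, hy⟩ := card_pos.1 (ht.trans hr)
    obtain ⟨-, x, hx, -⟩ := mem_reached.1 (mem_filter.1 hy).1
    have hXx : (X : Set V) = {x} := by
      rw [← coe_singleton, coe_inj]
      exact eq_singleton_iff_unique_mem.2
        ⟨hx, fun z hz => card_le_one.1 (by simpa using hX) z hz x hx⟩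
    exact ⟨x, hx, by simpa using (h.card_unreached_lt (hXx ▸ hr)).le⟩
  | succ L ih =>
    intro X p hX hr
    obtain ⟨y, hy⟩ := card_pos.1 (ht.trans hr)
    obtain ⟨-, x, hx, -⟩ := mem_reached.1 (mem_filter.1 hy).1
    rcases le_total #{y ∈ S | p < y} (3 * t) with hsmall | hlarge
    · refine ⟨x, hx, (card_le_card fun y hy => ?_).trans (hsmall.trans (by nlinarith))⟩
      exact mem_filter.2 ⟨(mem_unreached.1 (mem_filter.1 hy).1).1, (mem_filter.1 hy).2⟩
    obtain ⟨q, -, hq⟩ := exists_card_filter_le_eq _ (by omega) hlarge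
    rw [filter_filter] at hq
    obtain ⟨X', hX', hcX', hrX'⟩ := h.exists_subset_le_card_reached hr hq.ge
    obtain ⟨z, hz, hle⟩ := ih X' q (by omega) hrX'
    refine ⟨z, hX' hz, ?_⟩
    have hsplit : #{y ∈ unreached G S {z} | p < y} ≤
        #{y ∈ S | p < y ∧ y ≤ q} + #{y ∈ unreached G S {z} | q < y} := by
      refine card_le_card_add_card fun y hy => ?_
      simp only [mem_filter, mem_unreached] at hy ⊢
      rcases le_or_gt y q with hyq | hyq
      · exact .inl ⟨hy.1.1, hy.2, hyq⟩
      · exact .inr ⟨hy.1, hyq⟩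
    linarith

end HoleFree

end Reachability

section Sparse

variable {V : Type*} {G : SimpleGraph V} {X X' Y Y' : Finset V} {η θ k : ℝ}

open Classical in
/-- There are at most `η * #X * #Y` edges between `X` and `Y`. -/
def IsSparse (G : SimpleGraph V) (η : ℝ) (X Y : Finset V) : Prop :=
  (#(G.interedges X Y) : ℝ) ≤ η * (#X * #Y)

theorem isSparse_iff_sum_card_nbrs_le :
    IsSparse G η X Y ↔ ∑ x ∈ X, (#(nbrs G Y x) : ℝ) ≤ η * (#X * #Y) := by
  classical
  have hsum : #(G.interedges X Y) = ∑ x ∈ X, #(nbrs G Y x) := by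
    rw [SimpleGraph.interedges_def, card_filter, sum_product]
    simp only [nbrs, card_filter]
  rw [IsSparse, ← Nat.cast_sum, ← hsum]

theorem isSparse_of_card_nbrs_le (h : ∀ x ∈ X, (#(nbrs G Y x) : ℝ) ≤ η * #Y) :
    IsSparse G η X Y := by
  rw [isSparse_iff_sum_card_nbrs_le]
  refine (sum_le_card_nsmul X _ _ h).trans_eq ?_
  rw [nsmul_eq_mul]
  ring

namespace IsSparse

theorem symm (h : IsSparse G η X Y) : IsSparse G η Y X := by
  classical
  have : Std.Symm G.Adj := G.symm
  unfold IsSparse at h ⊢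
  rwa [mul_comm (#Y : ℝ), SimpleGraph.interedges, Rel.card_interedges_comm]

theorem mono (h : IsSparse G η X Y) (hηθ : η ≤ θ) : IsSparse G θ X Y :=
  h.trans (mul_le_mul_of_nonneg_right hηθ (by positivity))

theorem subset (h : IsSparse G η X Y) (hX : X' ⊆ X) (hY : Y' ⊆ Y)
    (hcard : η * (#X * #Y) ≤ θ * (#X' * #Y')) : IsSparse G θ X' Y' := by
  classical
  refine le_trans ?_ (h.trans hcard)
  exact_mod_cast card_le_card (SimpleGraph.interedges_mono G hX hY)

theorem exists_subset_card_nbrs_le (h : IsSparse G θ X Y) (hY : 0 < #Y) (hk : 0 < k) :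
    ∃ X' ⊆ X, (#X : ℝ) ≤ #X' + θ / k * #X ∧ ∀ x ∈ X', (#(nbrs G Y x) : ℝ) ≤ k * #Y := by
  refine ⟨{x ∈ X | #(nbrs G Y x) ≤ k * #Y}, filter_subset _ _, ?_,
    fun x hx => (mem_filter.1 hx).2⟩
  have hmarkov := (card_filter_lt_mul_le_sum X (fun x _ => Nat.cast_nonneg #(nbrs G Y x))
    (k * #Y)).trans (isSparse_iff_sum_card_nbrs_le.1 h)
  have hheavy : (#{x ∈ X | k * #Y < #(nbrs G Y x)} : ℝ) ≤ θ / k * #X := by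
    rw [div_mul_eq_mul_div, le_div_iff₀ hk]
    refine le_of_mul_le_mul_right ?_ (Nat.cast_pos.2 hY)
    linarith
  have hsum := card_filter_add_card_filter_not (s := X) (fun x => (#(nbrs G Y x) : ℝ) ≤ k * #Y)
  simp only [not_le] at hsum
  rify at hsum
  linarith

end IsSparse

end Sparse

section Tame

variable {V : Type*} [LinearOrder V] [Fintype V]

/-- `G` has no induced monotone path on five vertices, and all ordered pairs of sets of size about
`σ / log |V|` are joined by edges. The factor `3 * Nat.clog 2 |V| + 1` is the loss in
`HoleFree.exists_card_unreached_le`, so that sets of size `σ` have far-reaching vertices. -/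
structure Tame (G : SimpleGraph V) (σ : ℝ) : Prop where
  noPath : ∀ a b c d e : V, a < b → b < c → c < d → d < e →
    G.Adj a b → G.Adj b c → G.Adj c d → G.Adj d e →
    ¬ G.Adj a c → ¬ G.Adj a d → ¬ G.Adj a e → ¬ G.Adj b d → ¬ G.Adj b e → ¬ G.Adj c e → False
  exists_holeFree : ∃ t : ℕ, 1 ≤ t ∧ HoleFree G t ∧
    ((3 * Nat.clog 2 (Fintype.card V) + 1) * t : ℝ) ≤ σ

namespace Tame

variable {G : SimpleGraph V} {σ : ℝ}

theorem exists_holeFree_le (h : Tame G σ) : ∃ t : ℕ, 1 ≤ t ∧ HoleFree G t ∧ (t : ℝ) ≤ σ := by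
  obtain ⟨t, ht, hole, hσ⟩ := h.exists_holeFree
  exact ⟨t, ht, hole, le_trans (le_mul_of_one_le_left (by positivity)
    (le_add_of_nonneg_left (by positivity))) hσ⟩

theorem one_le (h : Tame G σ) : 1 ≤ σ := by
  obtain ⟨t, ht, -, htσ⟩ := h.exists_holeFree_le
  exact le_trans (by exact_mod_cast ht) htσ

theorem pos_of_le_mul (h : Tame G σ) {κ s : ℝ} (hκ : 0 < κ) (hσ : σ ≤ κ * s) : 0 < s :=
  pos_of_mul_pos_right (zero_lt_one.trans_le (h.one_le.trans hσ)) hκ.le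

theorem nonempty_of_le_mul_card (h : Tame G σ) {r : ℝ} {D : Finset V} (hD : σ ≤ r * #D) :
    D.Nonempty := by
  rw [nonempty_iff_ne_empty]
  rintro rfl
  rw [card_empty, Nat.cast_zero, mul_zero] at hD
  linarith [h.one_le]

theorem le_mul_card (h : Tame G σ) {r κ s : ℝ} {D : Finset V} (hκ : 0 < κ) (hσ : σ ≤ κ * s)
    (hr : κ ≤ r) (hD : s ≤ #D) : σ ≤ r * #D :=
  hσ.trans (mul_le_mul hr hD (h.pos_of_le_mul hκ hσ).le (hκ.le.trans hr))

theorem card_lt (h : Tame G σ) {X Y : Finset V} (hXY : Precedes X Y) (hX : σ ≤ #X)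
    (hn : ∀ x ∈ X, ∀ y ∈ Y, ¬ G.Adj x y) : (#Y : ℝ) < σ := by
  obtain ⟨t, -, hole, htσ⟩ := h.exists_holeFree_le
  have hlt := hole.card_lt hXY (by exact_mod_cast htσ.trans hX) hn
  exact lt_of_lt_of_le (by exact_mod_cast hlt) htσ

theorem exists_card_unreached_le (h : Tame G σ) {S X : Finset V} {p : V}
    (hr : σ ≤ #{y ∈ reached G S X | y ≤ p}) :
    ∃ x ∈ X, (#{y ∈ unreached G S {x} | p < y} : ℝ) ≤ σ := by
  obtain ⟨t, ht, hole, hσ⟩ := h.exists_holeFree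
  have htσ : (t : ℝ) ≤ σ := le_trans (le_mul_of_one_le_left (by positivity)
    (le_add_of_nonneg_left (by positivity))) hσ
  obtain ⟨x, hx, hle⟩ := hole.exists_card_unreached_le ht S (Nat.clog 2 (Fintype.card V)) X p
    ((card_le_univ X).trans (Nat.le_pow_clog one_lt_two _)) (by exact_mod_cast htσ.trans hr)
  exact ⟨x, hx, le_trans (by exact_mod_cast hle) hσ⟩

theorem card_le_card_reached_add (h : Tame G σ) {S X : Finset V} (hXS : Precedes X S)
    (hX : σ ≤ #X) (p : V) :
    (#{y ∈ S | y ≤ p} : ℝ) ≤ #{y ∈ reached G S X | y ≤ p} + σ := by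
  have hmiss : (#(commonNonneighbors G S X) : ℝ) < σ :=
    h.card_lt (hXS.mono subset_rfl commonNonneighbors_subset) hX
      fun x hx y hy => (mem_commonNonneighbors.1 hy).2 x hx
  have hcover : #{y ∈ S | y ≤ p} ≤
      #{y ∈ reached G S X | y ≤ p} + #(commonNonneighbors G S X) := by
    refine card_le_card_add_card fun y hy => ?_
    obtain ⟨hyS, hyp⟩ := mem_filter.1 hy
    by_cases hadj : ∃ x ∈ X, G.Adj x y
    · obtain ⟨x, hx, hxy⟩ := hadj
      exact .inl (mem_filter.2 ⟨mem_reached.2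
        ⟨hyS, x, hx, .single ⟨hXS hx hyS, hxy, hyS⟩⟩, hyp⟩)
    · exact .inr (mem_commonNonneighbors.2 ⟨hyS, fun x hx hxy => hadj ⟨x, hx, hxy⟩⟩)
  rify at hcover
  linarith

theorem exists_card_unreached_le_four_mul (h : Tame G σ) {S X : Finset V} (hXS : Precedes X S)
    (hX : σ ≤ #X) : ∃ x ∈ X, (#(unreached G S {x}) : ℝ) ≤ 4 * σ := by
  have hσ := h.one_le
  rcases le_total (#S : ℝ) (4 * σ) with hS | hS
  · obtain ⟨x, hx⟩ := card_pos.1 (by exact_mod_cast hσ.trans hX : 0 < #X)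
    refine ⟨x, hx, (Nat.cast_le.2 (card_le_card fun y hy => ?_)).trans hS⟩
    exact (mem_unreached.1 hy).1
  have hceil := Nat.ceil_lt_add_one (by linarith : 0 ≤ 2 * σ)
  have hceilS : (⌈2 * σ⌉₊ : ℝ) ≤ #S := by linarith
  obtain ⟨p, -, hp⟩ := exists_card_filter_le_eq S (Nat.ceil_pos.2 (by linarith : 0 < 2 * σ))
    (by exact_mod_cast hceilS)
  have hp' : 2 * σ ≤ #{y ∈ S | y ≤ p} := hp ▸ Nat.le_ceil _
  have hreach := h.card_le_card_reached_add hXS hX p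
  obtain ⟨x, hx, hxr⟩ := h.exists_card_unreached_le (S := S) (X := X) (p := p) (by linarith)
  refine ⟨x, hx, ?_⟩
  have hsplit : #(unreached G S {x}) ≤
      #{y ∈ S | y ≤ p} + #{y ∈ unreached G S {x} | p < y} := by
    refine card_le_card_add_card fun y hy => ?_
    rcases le_or_gt y p with hyp | hyp
    · exact .inl (mem_filter.2 ⟨(mem_unreached.1 hy).1, hyp⟩)
    · exact .inr (mem_filter.2 ⟨hy, hyp⟩)
  rw [hp] at hsplit
  rify at hsplit
  linarith

/-- Otherwise an induced path on three vertices starting at `v` would extend `u, x, v` to an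
induced path on five vertices. -/
theorem adj_of_reach (h : Tame G σ) {u x v w : V} {S : Finset V} (hux : u < x) (hxv : x < v)
    (hux' : G.Adj u x) (hxv' : G.Adj x v) (huv : ¬ G.Adj u v)
    (hS : ∀ y ∈ S, ¬ G.Adj u y ∧ ¬ G.Adj x y) (hvw : Reach G S v w) : G.Adj v w := by
  by_contra hn
  obtain ⟨y, hy, z, hz, hvy, hyz, hvy', hyz', hvz⟩ := hvw.exists_induced_path hn
  exact h.noPath u x v y z hux hxv hvy hyz hux' hxv' hvy' hyz' huv (hS y hy).1 (hS z hz).1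
    (hS y hy).2 (hS z hz).2 hvz

/-- Some neighbour `v` of `x` in `S` still reaches almost all of `C` while avoiding the neighbours
of `u` and `x`, hence is adjacent to all it reaches. -/
theorem exists_card_commonNonneighbors_le (h : Tame G σ) {u x : V} {S C : Finset V} (hux : u < x)
    (hux' : G.Adj u x) (hS : ∀ y ∈ S, ¬ G.Adj u y) (hSC : Precedes S C)
    (hr : σ ≤ #(commonNonneighbors G (reached G S {x}) {x})) :
    ∃ v ∈ S, (#(commonNonneighbors G C {u, x, v}) : ℝ) ≤ σ := by
  classical
  have hSne : S.Nonempty := by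
    obtain ⟨y, hy⟩ := card_pos.1 (by exact_mod_cast h.one_le.trans hr : 0 < #_)
    exact ⟨y, (mem_reached.1 (mem_commonNonneighbors.1 hy).1).1⟩
  set p := S.max' hSne
  set S₂ := commonNonneighbors G (S ∪ commonNonneighbors G C {u}) {x} with hS₂
  have hreached : commonNonneighbors G (reached G S {x}) {x} ⊆
      {y ∈ reached G S₂ (nbrs G {v ∈ S | x < v} x) | y ≤ p} := by
    intro y hy
    simp only [mem_commonNonneighbors, mem_reached_singleton, Set.mem_singleton_iff,
      forall_eq] at hy
    obtain ⟨⟨hyS, hxy⟩, hxy'⟩ := hy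
    obtain ⟨v, hv, hlt, hadj, hvy⟩ := hxy.exists_adj_reach hxy'
    have hvy₂ : Reach G S₂ v y :=
      hvy.mono (commonNonneighbors_subset_commonNonneighbors subset_union_left subset_rfl)
    exact mem_filter.2 ⟨mem_reached.2 ⟨hvy₂.mem, v, by simp [mem_nbrs, hv, hlt, hadj], hvy₂⟩,
      S.le_max' y hyS⟩
  obtain ⟨v, hv, hvr⟩ := h.exists_card_unreached_le
    (hr.trans (Nat.cast_le.2 (card_le_card hreached)))
  obtain ⟨hv, hxv'⟩ := mem_nbrs.1 hv
  obtain ⟨hvS, hxv⟩ := mem_filter.1 hv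
  have hS₂n : ∀ w ∈ S₂, ¬ G.Adj u w ∧ ¬ G.Adj x w := by
    simp only [hS₂, mem_commonNonneighbors, mem_union, Set.mem_singleton_iff, forall_eq]
    exact fun w ⟨hw, hxw⟩ => ⟨hw.elim (hS w) And.right, hxw⟩
  refine ⟨v, hvS, (Nat.cast_le.2 (card_le_card fun c hc => ?_)).trans hvr⟩
  simp only [mem_commonNonneighbors, Set.mem_insert_iff, Set.mem_singleton_iff,
    forall_eq_or_imp, forall_eq] at hc
  refine mem_filter.2 ⟨mem_unreached_singleton.2 ⟨?_, fun hvc => ?_⟩, hSC (S.max'_mem hSne) hc.1⟩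
  · simp [hS₂, mem_commonNonneighbors, hc]
  · exact hc.2.2.2 (h.adj_of_reach hux hxv hux' hxv' (hS v hvS) hS₂n hvc)

theorem exists_adj_card_unreached_le (h : Tame G σ) {u p : V} {A B : Finset V}
    (hAB : Precedes A B) (hA : #(unreached G A {u}) + σ ≤ #A)
    (hB : 2 * σ ≤ #(commonNonneighbors G {b ∈ B | b ≤ p} {u})) :
    ∃ x ∈ A, G.Adj u x ∧
      (#{y ∈ unreached G (commonNonneighbors G (A ∪ B) {u}) {x} | p < y} : ℝ) ≤ σ := by
  set B' := commonNonneighbors G {b ∈ B | b ≤ p} {u} with hB'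
  set S := commonNonneighbors G (A ∪ B) {u}
  have hB'B : ∀ y ∈ B', (y ∈ B ∧ y ≤ p) ∧ ¬ G.Adj u y := fun y hy => by
    simpa only [hB', mem_commonNonneighbors, mem_filter, Set.mem_singleton_iff, forall_eq]
      using hy
  have hcardA : #A ≤ #(reached G A {u}) + #(unreached G A {u}) :=
    card_le_card_add_card fun _ => mem_reached_or_mem_unreached
  have hmiss : (#(commonNonneighbors G B' (reached G A {u})) : ℝ) < σ := by
    rify at hcardA
    refine h.card_lt (X := reached G A {u}) (fun r hr y hy => ?_) (by linarith)
      fun r hr y hy => (mem_commonNonneighbors.1 hy).2 r hr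
    exact hAB (mem_reached.1 hr).1 (hB'B y (mem_commonNonneighbors.1 hy).1).1.1
  have hcover : #B' ≤ #{y ∈ reached G S (nbrs G A u) | y ≤ p} +
      #(commonNonneighbors G B' (reached G A {u})) := by
    refine card_le_card_add_card fun y hy => ?_
    by_cases hadj : ∃ r ∈ reached G A {u}, G.Adj r y
    · obtain ⟨r, hr, hry⟩ := hadj
      obtain ⟨⟨hyB, hyp⟩, -⟩ := hB'B y hy
      have hyB' : y ∈ commonNonneighbors G B {u} :=
        commonNonneighbors_subset_commonNonneighbors (filter_subset _ _) subset_rfl hy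
      exact .inl (mem_filter.2
        ⟨mem_reached_nbrs_of_adj hr hyB' (hAB (mem_reached.1 hr).1 hyB) hry, hyp⟩)
    · exact .inr (mem_commonNonneighbors.2 ⟨hy, fun r hr hry => hadj ⟨r, hr, hry⟩⟩)
  rify at hcover
  obtain ⟨x, hx, hxr⟩ := h.exists_card_unreached_le
    (by linarith : σ ≤ #{y ∈ reached G S (nbrs G A u) | y ≤ p})
  exact ⟨x, (mem_nbrs.1 hx).1, (mem_nbrs.1 hx).2, hxr⟩

theorem exists_adj_le_card_reached (h : Tame G σ) {A B : Finset V} (hAB : Precedes A B)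
    (hA : 10 * σ ≤ #A) (hB : 8 * σ ≤ #B) (dAB : ∀ a ∈ A, (#(nbrs G B a) : ℝ) ≤ 1 / 8 * #B) :
    ∃ u ∈ A, ∃ x ∈ A, u < x ∧ G.Adj u x ∧ ∃ S ⊆ A ∪ B, (∀ y ∈ S, ¬ G.Adj u y) ∧
      σ ≤ #(commonNonneighbors G (reached G S {x}) {x}) := by
  have hσ := h.one_le
  obtain ⟨q, hA₀, hA₁⟩ := exists_card_filter_le_eq_half A
    (by exact_mod_cast (by linarith : (2 : ℝ) ≤ #A))
  obtain ⟨p, hB₀, hB₁⟩ := exists_card_filter_le_eq_half B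
    (by exact_mod_cast (by linarith : (2 : ℝ) ≤ #B))
  set A₁ := {a ∈ A | q < a}
  have degB : ∀ a ∈ A, ∀ B' ⊆ B, (#(nbrs G B' a) : ℝ) ≤ 1 / 8 * #B := fun a ha B' hB' =>
    (Nat.cast_le.2 (card_le_card (nbrs_subset_nbrs hB'))).trans (dAB a ha)
  obtain ⟨u, hu, hur⟩ := h.exists_card_unreached_le_four_mul
    (precedes_filter_le_filter_lt A A q) (by linarith)
  obtain ⟨huA, huq⟩ := mem_filter.1 hu
  have hB₀u := card_le_card_commonNonneighbors_singleton (G := G) {b ∈ B | b ≤ p} u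
  have hB₀d := degB u huA _ (filter_subset (· ≤ p) B)
  rify at hB₀u
  obtain ⟨x, hx, hux, hxr⟩ := h.exists_adj_card_unreached_le
    (hAB.mono (filter_subset _ _) subset_rfl : Precedes A₁ B) (by linarith)
    (by linarith : 2 * σ ≤ #(commonNonneighbors G {b ∈ B | b ≤ p} {u}))
  obtain ⟨hxA, hqx⟩ := mem_filter.1 hx
  set S := commonNonneighbors G (A₁ ∪ B) {u}
  refine ⟨u, huA, x, hxA, huq.trans_lt hqx, hux, S, commonNonneighbors_subset.trans
    (union_subset_union (filter_subset _ _) subset_rfl),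
    fun y hy => (mem_commonNonneighbors.1 hy).2 u rfl, ?_⟩
  have hB₁u := card_le_card_commonNonneighbors_singleton (G := G) {b ∈ B | p < b} u
  have hB₁x := card_commonNonneighbors_le (G := G) {b ∈ B | p < b} {u} x
  have hB₁du := degB u huA _ (filter_subset (p < ·) B)
  have hB₁dx := degB x hxA _ (filter_subset (p < ·) B)
  have hcover := card_commonNonneighbors_pair_le (G := G)
    (subset_union_right : B ⊆ A₁ ∪ B) u x p
  rify at hB₁u hB₁x hcover
  linarith

theorem false_of_card_nbrs_le (h : Tame G σ) {A B C : Finset V} (hAB : Precedes A B)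
    (hBC : Precedes B C) (hA : 10 * σ ≤ #A) (hB : 8 * σ ≤ #B) (hC : 4 * σ < #C)
    (dAB : ∀ a ∈ A, (#(nbrs G B a) : ℝ) ≤ 1 / 8 * #B)
    (dAC : ∀ a ∈ A, (#(nbrs G C a) : ℝ) ≤ 1 / 4 * #C)
    (dBC : ∀ b ∈ B, (#(nbrs G C b) : ℝ) ≤ 1 / 4 * #C) : False := by
  have hB0 : (0 : ℝ) < #B := by linarith [h.one_le]
  have hABC : Precedes (A ∪ B) C :=
    (hAB.trans hBC (card_pos.1 (by exact_mod_cast hB0))).union_left hBC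
  have dC : ∀ v ∈ A ∪ B, (#(nbrs G C v) : ℝ) ≤ 1 / 4 * #C :=
    fun v hv => (mem_union.1 hv).elim (dAC v) (dBC v)
  obtain ⟨u, hu, x, hx, hux, hux', S, hSAB, huS, hS⟩ := h.exists_adj_le_card_reached hAB hA hB dAB
  obtain ⟨v, hv, hvC⟩ :=
    h.exists_card_commonNonneighbors_le hux hux' huS (hABC.mono hSAB subset_rfl) hS
  have hCv := card_le_card_commonNonneighbors_singleton (G := G) C v
  have hCx := card_commonNonneighbors_le (G := G) C {v} x
  have hCu := card_commonNonneighbors_le (G := G) C {x, v} u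
  rify at hCv hCx hCu
  linarith [dC v (hSAB hv), dAC x hx, dAC u hu]

theorem false_of_isSparse (h : Tame G σ) {A B C : Finset V} (hAB : Precedes A B)
    (hBC : Precedes B C) (hA : 100 * σ ≤ #A) (hB : 100 * σ ≤ #B) (hC : 100 * σ ≤ #C)
    (sAB : IsSparse G (1 / 100) A B) (sAC : IsSparse G (1 / 100) A C)
    (sBC : IsSparse G (1 / 100) B C) : False := by
  have hσ := h.one_le
  have hB0 : 0 < #B := by exact_mod_cast (by linarith : (0 : ℝ) < #B)
  have hC0 : 0 < #C := by exact_mod_cast (by linarith : (0 : ℝ) < #C)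
  obtain ⟨A₁, hA₁, cA₁, dA₁⟩ := sAB.exists_subset_card_nbrs_le hB0 (k := 1 / 10) (by norm_num)
  have sA₁C : IsSparse G (1 / 80) A₁ C := sAC.subset hA₁ subset_rfl (by
    rw [← mul_assoc, ← mul_assoc]
    exact mul_le_mul_of_nonneg_right (by linarith) (Nat.cast_nonneg _))
  obtain ⟨A₂, hA₂, cA₂, dA₂⟩ := sA₁C.exists_subset_card_nbrs_le hC0 (k := 1 / 4) (by norm_num)
  obtain ⟨B', hB', cB', dB'⟩ := sBC.exists_subset_card_nbrs_le hC0 (k := 1 / 4) (by norm_num)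
  have dA₂B' : ∀ a ∈ A₂, (#(nbrs G B' a) : ℝ) ≤ 1 / 8 * #B' := fun a ha => by
    have hle := card_le_card (nbrs_subset_nbrs (G := G) (v := a) hB')
    rify at hle
    linarith [dA₁ a (hA₂ ha)]
  exact h.false_of_card_nbrs_le (hAB.mono (hA₂.trans hA₁) hB') (hBC.mono hB' subset_rfl)
    (by linarith) (by linarith) (by linarith) dA₂B' dA₂ dB'

end Tame

end Tame

section IndependentTriples

variable {V : Type*}

open Classical in
/-- The pairs of non-adjacent vertices in `A × B`. -/
noncomputable def nonadjPairs (G : SimpleGraph V) (A B : Finset V) : Finset (V × V) :=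
  {p ∈ A ×ˢ B | ¬ G.Adj p.1 p.2}

open Classical in
/-- The triples of pairwise non-adjacent vertices in `A × B × C`. -/
noncomputable def indepTriples (G : SimpleGraph V) (A B C : Finset V) : Finset (V × V × V) :=
  {τ ∈ A ×ˢ B ×ˢ C | ¬ G.Adj τ.1 τ.2.1 ∧ ¬ G.Adj τ.1 τ.2.2 ∧ ¬ G.Adj τ.2.1 τ.2.2}

open Classical in
/-- The pairs in `X × Y` with fewer than `k` common non-neighbours in `C`. -/
noncomputable def scarcePairs (G : SimpleGraph V) (X Y C : Finset V) (k : ℝ) : Finset (V × V) :=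
  {p ∈ X ×ˢ Y | #(commonNonneighbors G C {p.1, p.2}) < k}

open Classical in
/-- The triples in `X × Y × Z` with fewer than `k` common non-neighbours in `C`. -/
noncomputable def scarceTriples (G : SimpleGraph V) (X Y Z C : Finset V) (k : ℝ) :
    Finset (V × V × V) :=
  {τ ∈ X ×ˢ Y ×ˢ Z | #(commonNonneighbors G C {τ.1, τ.2.1, τ.2.2}) < k}

variable {G : SimpleGraph V} {A B C X Y Z X' Y' : Finset V} {k : ℝ}

theorem mem_nonadjPairs {p : V × V} :
    p ∈ nonadjPairs G A B ↔ (p.1 ∈ A ∧ p.2 ∈ B) ∧ ¬ G.Adj p.1 p.2 := by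
  classical rw [nonadjPairs, mem_filter, mem_product]

theorem mem_indepTriples {τ : V × V × V} :
    τ ∈ indepTriples G A B C ↔ (τ.1 ∈ A ∧ τ.2.1 ∈ B ∧ τ.2.2 ∈ C) ∧
      ¬ G.Adj τ.1 τ.2.1 ∧ ¬ G.Adj τ.1 τ.2.2 ∧ ¬ G.Adj τ.2.1 τ.2.2 := by
  classical rw [indepTriples, mem_filter, mem_product, mem_product]

theorem mem_scarcePairs {p : V × V} :
    p ∈ scarcePairs G X Y C k ↔
      (p.1 ∈ X ∧ p.2 ∈ Y) ∧ #(commonNonneighbors G C {p.1, p.2}) < k := by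
  classical rw [scarcePairs, mem_filter, mem_product]

theorem mem_scarceTriples {τ : V × V × V} :
    τ ∈ scarceTriples G X Y Z C k ↔ (τ.1 ∈ X ∧ τ.2.1 ∈ Y ∧ τ.2.2 ∈ Z) ∧
      #(commonNonneighbors G C {τ.1, τ.2.1, τ.2.2}) < k := by
  classical rw [scarceTriples, mem_filter, mem_product, mem_product]

theorem scarcePairs_subset_scarcePairs (hX : X' ⊆ X) (hY : Y' ⊆ Y) :
    scarcePairs G X' Y' C k ⊆ scarcePairs G X Y C k := fun p hp => by
  obtain ⟨⟨hpX, hpY⟩, hp⟩ := mem_scarcePairs.1 hp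
  exact mem_scarcePairs.2 ⟨⟨hX hpX, hY hpY⟩, hp⟩

theorem card_nonadjPairs_le : #(nonadjPairs G A B) ≤ #A * #B := by
  classical exact (card_filter_le _ _).trans (card_product A B).le

theorem card_scarceTriples_le : #(scarceTriples G X Y Z C k) ≤ #X * (#Y * #Z) := by
  classical
  exact (card_filter_le _ _).trans_eq (by rw [card_product, card_product])

theorem card_indepTriples_le (G : SimpleGraph V) (A B C : Finset V) :
    #(indepTriples G A B C) ≤ #A * #B * #C := by
  classical
  rw [mul_assoc, ← card_product B, ← card_product]
  exact card_filter_le _ _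

theorem card_indepTriples_eq_sum (G : SimpleGraph V) (A B C : Finset V) :
    #(indepTriples G A B C) =
      ∑ p ∈ nonadjPairs G A B, #(commonNonneighbors G C {p.1, p.2}) := by
  classical
  rw [indepTriples, nonadjPairs, card_filter, sum_filter, sum_product, sum_product]
  refine sum_congr rfl fun a _ => ?_
  rw [sum_product]
  refine sum_congr rfl fun b _ => ?_
  simp only [commonNonneighbors, card_filter, Set.mem_insert_iff, Set.mem_singleton_iff,
    forall_eq_or_imp, forall_eq]
  split_ifs with hab <;> simp [hab]

theorem card_scarcePairs_mul_le_right (X Y C : Finset V) (Z : Finset V) (k : ℝ) :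
    #(scarcePairs G X Y C k) * #Z ≤ #(scarceTriples G X Y Z C k) := by
  rw [← card_product]
  refine card_le_card_of_injOn (fun q => (q.1.1, q.1.2, q.2)) (fun q hq => ?_) ?_
  · simp only [coe_product, Set.mem_prod, mem_coe, mem_scarcePairs, mem_scarceTriples] at hq ⊢
    refine ⟨⟨hq.1.1.1, hq.1.1.2, hq.2⟩, lt_of_le_of_lt (Nat.cast_le.2 (card_le_card
      (commonNonneighbors_subset_commonNonneighbors subset_rfl ?_))) hq.1.2⟩
    exact Set.insert_subset_insert (Set.singleton_subset_iff.2 (Set.mem_insert _ _))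
  · rintro ⟨⟨x, y⟩, z⟩ - ⟨⟨x', y'⟩, z'⟩ - h
    simpa [and_assoc] using h

theorem card_mul_card_scarcePairs_le (X Y Z C : Finset V) (k : ℝ) :
    #X * #(scarcePairs G Y Z C k) ≤ #(scarceTriples G X Y Z C k) := by
  rw [← card_product]
  refine card_le_card fun τ hτ => ?_
  obtain ⟨hX, hτ⟩ := mem_product.1 hτ
  obtain ⟨hYZ, hk⟩ := mem_scarcePairs.1 hτ
  exact mem_scarceTriples.2 ⟨⟨hX, hYZ⟩, lt_of_le_of_lt (Nat.cast_le.2 (card_le_card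
    (commonNonneighbors_subset_commonNonneighbors subset_rfl (Set.subset_insert _ _)))) hk⟩

end IndependentTriples

section DependentRandomChoice

variable {V : Type*} {G : SimpleGraph V} {A B C A' B' : Finset V} {α k ε : ℝ} {K : ℕ}

theorem sum_card_filter_forall_mem [DecidableEq V] {ι : Type*} (P : Finset ι) {D : ι → Finset V}
    (hD : ∀ p, D p ⊆ C) (K : ℕ) :
    ∑ f ∈ Fintype.piFinset fun _ : Fin K => C, #{p ∈ P | ∀ i, f i ∈ D p} =
      ∑ p ∈ P, #(D p) ^ K := by
  refine (sum_card_bipartiteAbove_eq_sum_card_bipartiteBelow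
    fun (f : Fin K → V) p => ∀ i, f i ∈ D p).trans (sum_congr rfl fun p _ => ?_)
  rw [← Fintype.card_piFinset_const]
  congr 1
  ext f
  simp only [mem_bipartiteBelow, Fintype.mem_piFinset]
  exact ⟨And.right, fun h => ⟨fun i => hD p (h i), h⟩⟩

theorem nonadjPairs_commonNonneighbors_range [DecidableEq V] {f : Fin K → V}
    (hf : ∀ i, f i ∈ C) :
    nonadjPairs G (commonNonneighbors G A (Set.range f)) (commonNonneighbors G B (Set.range f)) =
      {p ∈ nonadjPairs G A B | ∀ i, f i ∈ commonNonneighbors G C {p.1, p.2}} := by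
  ext p
  simp only [mem_nonadjPairs, mem_filter, mem_commonNonneighbors, Set.forall_mem_range,
    fun i => G.adj_comm (f i), Set.mem_insert_iff, Set.mem_singleton_iff, forall_eq_or_imp,
    forall_eq, hf, true_and,
    forall_and]
  tauto

theorem scarceTriples_commonNonneighbors_range [DecidableEq V] {f : Fin K → V}
    (hf : ∀ i, f i ∈ C) :
    scarceTriples G (commonNonneighbors G A (Set.range f)) (commonNonneighbors G A (Set.range f))
        (commonNonneighbors G B (Set.range f)) C k =
      {τ ∈ scarceTriples G A A B C k |
        ∀ i, f i ∈ commonNonneighbors G C {τ.1, τ.2.1, τ.2.2}} := by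
  ext τ
  simp only [mem_scarceTriples, mem_filter, mem_commonNonneighbors, Set.forall_mem_range,
    fun i => G.adj_comm (f i), Set.mem_insert_iff, Set.mem_singleton_iff, forall_eq_or_imp,
    forall_eq, hf, true_and,
    forall_and]
  tauto

theorem le_sum_card_nonadjPairs (hε : 0 ≤ ε) (hA : A.Nonempty) (hB : B.Nonempty)
    (h : ε * (#A * #B * #C) ≤ #(indepTriples G A B C)) (hK : K ≠ 0) :
    ε ^ K * (#A * #B) * (#C : ℝ) ^ K ≤
      ∑ f ∈ Fintype.piFinset fun _ : Fin K => C,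
        (#(nonadjPairs G (commonNonneighbors G A (Set.range f))
          (commonNonneighbors G B (Set.range f))) : ℝ) := by
  classical
  have hsum : ∑ f ∈ Fintype.piFinset fun _ : Fin K => C,
      #(nonadjPairs G (commonNonneighbors G A (Set.range f))
        (commonNonneighbors G B (Set.range f))) =
      ∑ p ∈ nonadjPairs G A B, #(commonNonneighbors G C {p.1, p.2}) ^ K := by
    rw [← sum_card_filter_forall_mem (C := C) _ fun _ => commonNonneighbors_subset]
    exact sum_congr rfl fun f hf => by
      rw [nonadjPairs_commonNonneighbors_range (Fintype.mem_piFinset.1 hf)]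
  obtain ⟨m, rfl⟩ := Nat.exists_eq_succ_of_ne_zero hK
  rw [← Nat.cast_sum, hsum]
  push_cast
  have hAB : 0 < (#A * #B : ℝ) := by exact_mod_cast Nat.mul_pos hA.card_pos hB.card_pos
  refine le_of_mul_le_mul_left ?_ (pow_pos hAB m)
  calc (#A * #B : ℝ) ^ m * (ε ^ (m + 1) * (#A * #B) * (#C : ℝ) ^ (m + 1))
      = (ε * (#A * #B * #C)) ^ (m + 1) := by ring
    _ ≤ (∑ p ∈ nonadjPairs G A B, (#(commonNonneighbors G C {p.1, p.2}) : ℝ)) ^ (m + 1) := by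
        rw [← Nat.cast_sum, ← card_indepTriples_eq_sum]
        exact pow_le_pow_left₀ (by positivity) h _
    _ ≤ (#(nonadjPairs G A B) : ℝ) ^ m *
          ∑ p ∈ nonadjPairs G A B, (#(commonNonneighbors G C {p.1, p.2}) : ℝ) ^ (m + 1) :=
        pow_sum_le_card_mul_sum_pow (fun _ _ => Nat.cast_nonneg _) m
    _ ≤ _ := by
        gcongr
        exact_mod_cast card_nonadjPairs_le

theorem sum_card_scarceTriples_le (hk : 0 ≤ k) :
    ∑ f ∈ Fintype.piFinset fun _ : Fin K => C,
      (#(scarceTriples G (commonNonneighbors G A (Set.range f))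
        (commonNonneighbors G A (Set.range f)) (commonNonneighbors G B (Set.range f)) C k) : ℝ) ≤
      k ^ K * (#A * #A * #B) := by
  classical
  have hsum : ∑ f ∈ Fintype.piFinset fun _ : Fin K => C,
      #(scarceTriples G (commonNonneighbors G A (Set.range f))
        (commonNonneighbors G A (Set.range f)) (commonNonneighbors G B (Set.range f)) C k) =
      ∑ τ ∈ scarceTriples G A A B C k,
        #(commonNonneighbors G C {τ.1, τ.2.1, τ.2.2}) ^ K := by
    rw [← sum_card_filter_forall_mem (C := C) _ fun _ => commonNonneighbors_subset]
    exact sum_congr rfl fun f hf => by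
      rw [scarceTriples_commonNonneighbors_range (Fintype.mem_piFinset.1 hf)]
  rw [← Nat.cast_sum, hsum]
  push_cast
  calc ∑ τ ∈ scarceTriples G A A B C k, (#(commonNonneighbors G C {τ.1, τ.2.1, τ.2.2}) : ℝ) ^ K
      ≤ ∑ τ ∈ scarceTriples G A A B C k, k ^ K :=
        sum_le_sum fun _ hτ => pow_le_pow_left₀ (Nat.cast_nonneg _) (mem_scarceTriples.1 hτ).2.le _
    _ ≤ k ^ K * (#A * #A * #B) := by
        rw [sum_const, nsmul_eq_mul, mul_comm]
        refine mul_le_mul_of_nonneg_left ?_ (pow_nonneg hk K)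
        rw [mul_assoc]
        exact_mod_cast card_scarceTriples_le

/-- Take for `A'` and `B'` the common non-neighbourhoods in `A` and `B` of a random `K`-tuple of
vertices of `C`. -/
theorem exists_card_scarceTriples_le (hε : 0 < ε) (hK : K ≠ 0) (hA : A.Nonempty)
    (hB : B.Nonempty) (hC : C.Nonempty) (h : ε * (#A * #B * #C) ≤ #(indepTriples G A B C)) :
    ∃ A' ⊆ A, ∃ B' ⊆ B,
      (ε ^ K) ^ 6 * (#A * #A * #B) + #(scarceTriples G A' A' B' C (ε ^ 6 * #C)) ≤
        2 * (ε ^ K) ^ 5 * #A * #(nonadjPairs G A' B') := by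
  have hpairs := le_sum_card_nonadjPairs hε.le hA hB h hK
  have htriples := sum_card_scarceTriples_le (G := G) (A := A) (B := B) (C := C) (K := K)
    (k := ε ^ 6 * #C) (by positivity)
  have hcard : (#(Fintype.piFinset fun _ : Fin K => C) : ℝ) = (#C : ℝ) ^ K := by
    rw [Fintype.card_piFinset_const, Nat.cast_pow]
  obtain ⟨f, -, hf⟩ := exists_le_of_sum_le (Fintype.piFinset_nonempty.2 fun _ : Fin K => hC)
    (f := fun f => (ε ^ K) ^ 6 * (#A * #A * #B) +
      (#(scarceTriples G (commonNonneighbors G A (Set.range f))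
        (commonNonneighbors G A (Set.range f)) (commonNonneighbors G B (Set.range f)) C
        (ε ^ 6 * #C)) : ℝ))
    (g := fun f => 2 * (ε ^ K) ^ 5 * #A *
      (#(nonadjPairs G (commonNonneighbors G A (Set.range f))
        (commonNonneighbors G B (Set.range f))) : ℝ)) (by
    rw [sum_add_distrib, sum_const, nsmul_eq_mul, hcard, ← mul_sum]
    have := mul_le_mul_of_nonneg_left hpairs (by positivity : 0 ≤ 2 * (ε ^ K) ^ 5 * (#A : ℝ))
    linear_combination this + htriples)
  exact ⟨_, commonNonneighbors_subset, _, commonNonneighbors_subset, hf⟩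

/-- The pair `A' ⊆ A`, `B' ⊆ B` produced by dependent random choice: it has many non-adjacent
pairs, and few of its triples have fewer than `k` common non-neighbours in `C`. -/
structure IsRichPair (G : SimpleGraph V) (α k : ℝ) (A B C A' B' : Finset V) : Prop where
  subset_left : A' ⊆ A
  subset_right : B' ⊆ B
  le_card_nonadjPairs : α * (#A * #B) ≤ #(nonadjPairs G A' B')
  card_scarceTriples_le : #(scarceTriples G A' A' B' C k) ≤ α ^ 4 * (#A * #A * #B)

namespace IsRichPair

theorem le_card_left (h : IsRichPair G α k A B C A' B') (hB : B.Nonempty) : α * #A ≤ #A' := by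
  have hB' : (#B' : ℝ) ≤ #B := Nat.cast_le.2 (card_le_card h.subset_right)
  have hpairs : (#(nonadjPairs G A' B') : ℝ) ≤ #A' * #B' := by
    exact_mod_cast card_nonadjPairs_le
  refine le_of_mul_le_mul_right ?_ (Nat.cast_pos.2 hB.card_pos : (0 : ℝ) < #B)
  linarith [h.le_card_nonadjPairs,
    mul_le_mul_of_nonneg_left hB' (Nat.cast_nonneg (α := ℝ) #A')]

theorem le_card_right (h : IsRichPair G α k A B C A' B') (hA : A.Nonempty) : α * #B ≤ #B' := by
  have hA' : (#A' : ℝ) ≤ #A := Nat.cast_le.2 (card_le_card h.subset_left)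
  have hpairs : (#(nonadjPairs G A' B') : ℝ) ≤ #A' * #B' := by
    exact_mod_cast card_nonadjPairs_le
  refine le_of_mul_le_mul_left ?_ (Nat.cast_pos.2 hA.card_pos : (0 : ℝ) < #A)
  linarith [h.le_card_nonadjPairs,
    mul_le_mul_of_nonneg_right hA' (Nat.cast_nonneg (α := ℝ) #B')]

theorem card_scarcePairs_left_le (h : IsRichPair G α k A B C A' B') (hα : 0 < α)
    (hA : A.Nonempty) (hB : B.Nonempty) :
    #(scarcePairs G A' A' C k) ≤ α ^ 3 * (#A * #A) := by
  have hB0 : (0 : ℝ) < #B := Nat.cast_pos.2 hB.card_pos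
  refine le_of_mul_le_mul_right ?_ (mul_pos hα hB0)
  calc (#(scarcePairs G A' A' C k) : ℝ) * (α * #B)
      ≤ #(scarcePairs G A' A' C k) * #B' := by gcongr; exact h.le_card_right hA
    _ ≤ #(scarceTriples G A' A' B' C k) := by
        exact_mod_cast card_scarcePairs_mul_le_right A' A' C B' k
    _ ≤ α ^ 4 * (#A * #A * #B) := h.card_scarceTriples_le
    _ = α ^ 3 * (#A * #A) * (α * #B) := by ring

theorem card_scarcePairs_le (h : IsRichPair G α k A B C A' B') (hα : 0 < α)
    (hA : A.Nonempty) (hB : B.Nonempty) :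
    #(scarcePairs G A' B' C k) ≤ α ^ 3 * (#A * #B) := by
  have hA0 : (0 : ℝ) < #A := Nat.cast_pos.2 hA.card_pos
  refine le_of_mul_le_mul_left ?_ (mul_pos hα hA0)
  calc α * #A * (#(scarcePairs G A' B' C k) : ℝ)
      ≤ #A' * #(scarcePairs G A' B' C k) := by gcongr; exact h.le_card_left hB
    _ ≤ #(scarceTriples G A' A' B' C k) := by
        exact_mod_cast card_mul_card_scarcePairs_le A' A' B' C k
    _ ≤ α ^ 4 * (#A * #A * #B) := h.card_scarceTriples_le
    _ = α * #A * (α ^ 3 * (#A * #B)) := by ring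

theorem exists_subset_card_nbrs_le (h : IsRichPair G α k A B C A' B')
    (hα : 0 ≤ α) (hB : B.Nonempty) (sAB : IsSparse G (α / 800) A B) :
    ∃ D ⊆ A', 3 / 4 * (α * #A) ≤ #D ∧ ∀ x ∈ D, (#(nbrs G B x) : ℝ) ≤ 1 / 10 * #B := by
  have hA' := h.le_card_left hB
  have sA'B : IsSparse G (1 / 800) A' B := sAB.subset h.subset_left subset_rfl (by
    linarith [mul_le_mul_of_nonneg_right hA' (Nat.cast_nonneg (α := ℝ) #B)])
  obtain ⟨D, hD, hDc, dD⟩ :=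
    sA'B.exists_subset_card_nbrs_le hB.card_pos (k := 1 / 10) (by norm_num)
  norm_num at hDc
  have hαA : 0 ≤ α * #A := by positivity
  exact ⟨D, hD, by linarith, dD⟩

end IsRichPair

theorem exists_isRichPair (ε : ℝ) (hε : 0 < ε) :
    ∃ δ : ℝ, 0 < δ ∧ δ ≤ 1 ∧ ∀ α₀ : ℝ, 0 < α₀ → ∃ α : ℝ, 0 < α ∧ α ≤ α₀ ∧
      ∀ {V : Type u} (G : SimpleGraph V) (A B C : Finset V),
        A.Nonempty → B.Nonempty → C.Nonempty → ε * (#A * #B * #C) ≤ #(indepTriples G A B C) →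
        ∃ A' B', IsRichPair G α (δ * #C) A B C A' B' := by
  wlog hε2 : ε ≤ 1 / 2 generalizing ε
  · obtain ⟨δ, h0, h1, hδ⟩ := this (1 / 2) (by norm_num) le_rfl
    refine ⟨δ, h0, h1, fun α₀ hα₀ => ?_⟩
    obtain ⟨α, h2, h3, hα⟩ := hδ α₀ hα₀
    refine ⟨α, h2, h3, fun G A B C hA hB hC h => hα G A B C hA hB hC (le_trans ?_ h)⟩
    exact mul_le_mul_of_nonneg_right (not_le.1 hε2).le (by positivity)
  refine ⟨ε ^ 6, by positivity, pow_le_one₀ hε.le (by linarith), fun α₀ hα₀ => ?_⟩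
  obtain ⟨e, he, heα₀, he32, K, hK, rfl⟩ : ∃ e : ℝ, 0 < e ∧ e ≤ α₀ ∧ e ≤ 1 / 32 ∧
      ∃ K ≠ 0, ε ^ K = e := by
    obtain ⟨K, hK⟩ := exists_pow_lt_of_lt_one (lt_min hα₀ (by norm_num : (0 : ℝ) < 1 / 32))
      (by linarith : ε < 1)
    have hK' := (pow_le_pow_of_le_one hε.le (by linarith) K.le_succ).trans hK.le
    exact ⟨_, pow_pos hε _, hK'.trans (min_le_left _ _), hK'.trans (min_le_right _ _), _,
      K.succ_ne_zero, rfl⟩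
  refine ⟨ε ^ K / 2, by positivity, by linarith, fun G A B C hA hB hC h => ?_⟩
  obtain ⟨A', hA', B', hB', hmain⟩ := exists_card_scarceTriples_le hε hK hA hB hC h
  have hA0 : (0 : ℝ) < #A := Nat.cast_pos.2 hA.card_pos
  generalize ε ^ K = e at *
  have hle : (#(nonadjPairs G A' B') : ℝ) ≤ #A * #B := by
    exact_mod_cast card_nonadjPairs_le.trans
      (Nat.mul_le_mul (card_le_card hA') (card_le_card hB'))
  refine ⟨A', B', hA', hB', ?_, ?_⟩
  · refine le_of_mul_le_mul_left ?_ (by positivity : 0 < 2 * e ^ 5 * #A)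
    linarith [Nat.cast_nonneg (α := ℝ) #(scarceTriples G A' A' B' C (ε ^ 6 * #C))]
  · calc (#(scarceTriples G A' A' B' C (ε ^ 6 * #C)) : ℝ)
        ≤ 2 * e ^ 5 * #A * #(nonadjPairs G A' B') := by
          linarith [(by positivity : 0 ≤ e ^ 6 * (#A * #A * #B : ℝ))]
      _ ≤ 2 * e ^ 5 * #A * (#A * #B) := by gcongr
      _ = 2 * e * (e ^ 4 * (#A * #A * #B)) := by ring
      _ ≤ 1 / 16 * (e ^ 4 * (#A * #A * #B)) := by gcongr; linarith
      _ = (e / 2) ^ 4 * (#A * #A * #B) := by ring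

end DependentRandomChoice

section SparsePairs

section Graph

variable {V : Type*} {G : SimpleGraph V} {A B C X Y : Finset V} {δ η θ ρ s : ℝ}

theorem sum_card_commonNonneighbors_singleton (G : SimpleGraph V) (A B : Finset V) :
    ∑ v ∈ B, #(commonNonneighbors G A {v}) = #(nonadjPairs G A B) := by
  classical
  simp only [commonNonneighbors, nonadjPairs, Set.mem_singleton_iff, forall_eq, card_filter,
    sum_product_right, G.adj_comm]

theorem le_card_indepTriples (hX : X ⊆ A) (hY : Y ⊆ B) (hδ : 0 ≤ δ)
    (hsparse : IsSparse G (1 / 4) X Y)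
    (hscarce : #(scarcePairs G A B C (δ * #C)) ≤ (1 / 4 : ℝ) * (#X * #Y)) :
    δ / 2 * (#X * #Y * #C) ≤ #(indepTriples G X Y C) := by
  classical
  set good := {p ∈ nonadjPairs G X Y | δ * #C ≤ #(commonNonneighbors G C {p.1, p.2})}
  have hcover : #X * #Y ≤ #(G.interedges X Y) + (#(scarcePairs G A B C (δ * #C)) + #good) := by
    rw [← card_product]
    refine (card_le_card_add_card (v := scarcePairs G A B C (δ * #C) ∪ good) fun p hp => ?_).trans
      (Nat.add_le_add_left (card_union_le _ _) _)
    obtain ⟨hpX, hpY⟩ := mem_product.1 hp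
    by_cases hadj : G.Adj p.1 p.2
    · exact .inl (Rel.mem_interedges_iff.2 ⟨hpX, hpY, hadj⟩)
    rw [mem_union, mem_scarcePairs, mem_filter, mem_nonadjPairs]
    rcases lt_or_ge (#(commonNonneighbors G C {p.1, p.2}) : ℝ) (δ * #C) with hlt | hge
    · exact .inr (.inl ⟨⟨hX hpX, hY hpY⟩, hlt⟩)
    · exact .inr (.inr ⟨⟨⟨hpX, hpY⟩, hadj⟩, hge⟩)
  have hgood : (1 / 2 : ℝ) * (#X * #Y) ≤ #good := by
    rify at hcover
    unfold IsSparse at hsparse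
    linarith
  calc δ / 2 * (#X * #Y * #C) = (1 / 2 : ℝ) * (#X * #Y) * (δ * #C) := by ring
    _ ≤ #good * (δ * #C) := by gcongr
    _ ≤ ∑ p ∈ good, (#(commonNonneighbors G C {p.1, p.2}) : ℝ) := by
        rw [← nsmul_eq_mul]
        exact card_nsmul_le_sum _ _ _ fun p hp => (mem_filter.1 hp).2
    _ ≤ #(indepTriples G X Y C) := by
        rw [card_indepTriples_eq_sum, Nat.cast_sum]
        exact sum_le_sum_of_subset_of_nonneg (filter_subset _ _) fun _ _ _ => Nat.cast_nonneg _

/-- A subset of `A` containing at least a `ρ` proportion of it. -/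
structure IsLargePart (ρ : ℝ) (X A : Finset V) : Prop where
  subset : X ⊆ A
  le_card : ρ * #A ≤ #X

theorem IsLargePart.mul_le_card (h : IsLargePart ρ X A) (hρ : 0 ≤ ρ)
    (hs : s ≤ #A) : ρ * s ≤ #X :=
  (mul_le_mul_of_nonneg_left hs hρ).trans h.le_card

theorem IsSparse.of_isLargePart_left (h : IsSparse G η A B)
    (hX : IsLargePart ρ X A) (hθ : 0 ≤ θ) (hη : η ≤ θ * ρ) : IsSparse G θ X B :=
  h.subset hX.subset subset_rfl <|
    calc η * (#A * #B) ≤ θ * ρ * (#A * #B) := by gcongr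
      _ = θ * (ρ * #A * #B) := by ring
      _ ≤ θ * (#X * #B) := by gcongr; exact hX.le_card

end Graph

section PrivateEdges

variable {V : Type*} [LinearOrder V] {G : SimpleGraph V} {A B C : Finset V} {k σ : ℝ}

open Classical in
/-- The edges `u x` in `A`, with `u < x`, such that `x` is a neighbour of `v` and `u` is not. If
`v` comes after `A`, these are the edges that `v` extends to an induced monotone path. -/
noncomputable def privateEdges (G : SimpleGraph V) (A : Finset V) (v : V) : Finset (V × V) :=
  {p ∈ A ×ˢ A | p.1 < p.2 ∧ G.Adj p.1 p.2 ∧ ¬ G.Adj p.1 v ∧ G.Adj p.2 v}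

theorem mem_privateEdges {p : V × V} {v : V} :
    p ∈ privateEdges G A v ↔ (p.1 ∈ A ∧ p.2 ∈ A) ∧ p.1 < p.2 ∧ G.Adj p.1 p.2 ∧
      ¬ G.Adj p.1 v ∧ G.Adj p.2 v := by
  classical rw [privateEdges, mem_filter, mem_product]

variable [Fintype V]

theorem Tame.card_lt_of_forall_private (h : Tame G σ) {u x : V} (hux : u < x)
    (hux' : G.Adj u x) (hB : ∀ v ∈ B, x < v ∧ ¬ G.Adj u v ∧ G.Adj x v) (hBC : Precedes B C)
    (hk : 4 * σ < k) (hBk : ∀ v ∈ B, k ≤ #(commonNonneighbors G C {u, x, v})) :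
    (#B : ℝ) < σ := by
  by_contra! hσ
  obtain ⟨v, hv, hun⟩ := h.exists_card_unreached_le_four_mul (S := commonNonneighbors G C {u, x})
    (hBC.mono subset_rfl commonNonneighbors_subset) hσ
  obtain ⟨hxv, huv, hxv'⟩ := hB v hv
  have hsub : commonNonneighbors G C {u, x, v} ⊆
      unreached G (commonNonneighbors G C {u, x}) {v} := fun w hw => by
    obtain ⟨hwC, hw⟩ := mem_commonNonneighbors.1 hw
    refine mem_unreached_singleton.2 ⟨mem_commonNonneighbors.2 ⟨hwC, fun y hy => hw y ?_⟩,
      fun hvw => hw v (by simp) (h.adj_of_reach hux hxv hux' hxv' huv (fun y hy => ?_) hvw)⟩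
    · rcases hy with rfl | rfl <;> simp
    · have hy := (mem_commonNonneighbors.1 hy).2
      exact ⟨hy u (by simp), hy x (by simp)⟩
  have hcard : (#(commonNonneighbors G C {u, x, v}) : ℝ) ≤
      #(unreached G (commonNonneighbors G C {u, x}) {v}) := Nat.cast_le.2 (card_le_card hsub)
  linarith [hBk v hv]

theorem Tame.card_filter_mem_privateEdges_le (h : Tame G σ) (hAB : Precedes A B)
    (hBC : Precedes B C) (hk : 4 * σ < k) (p : V × V) :
    (#{v ∈ B | p ∈ privateEdges G A v} : ℝ) ≤
      #{v ∈ B | #(commonNonneighbors G C {p.1, p.2, v}) < k} + σ := by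
  set D := {v ∈ B | p ∈ privateEdges G A v ∧ k ≤ #(commonNonneighbors G C {p.1, p.2, v})}
  have hsplit : #{v ∈ B | p ∈ privateEdges G A v} ≤
      #{v ∈ B | #(commonNonneighbors G C {p.1, p.2, v}) < k} + #D := by
    refine card_le_card_add_card fun v hv => ?_
    simp only [D, mem_filter] at hv ⊢
    exact (lt_or_ge _ k).imp (fun hlt => ⟨hv.1, hlt⟩) fun hge => ⟨hv.1, hv.2, hge⟩
  have hD : (#D : ℝ) ≤ σ := by
    rcases D.eq_empty_or_nonempty with hempty | ⟨v, hv⟩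
    · rw [hempty, card_empty, Nat.cast_zero]
      exact zero_le_one.trans h.one_le
    obtain ⟨⟨-, hpA⟩, hlt, hadj, -⟩ := mem_privateEdges.1 (mem_filter.1 hv).2.1
    refine (h.card_lt_of_forall_private hlt hadj (fun w hw => ?_)
      (hBC.mono (filter_subset _ _) subset_rfl) hk fun w hw => (mem_filter.1 hw).2.2).le
    obtain ⟨hwB, hw, -⟩ := mem_filter.1 hw
    exact ⟨hAB hpA hwB, (mem_privateEdges.1 hw).2.2.2⟩
  rify at hsplit
  linarith

theorem Tame.sum_card_privateEdges_le (h : Tame G σ) (hAB : Precedes A B) (hBC : Precedes B C)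
    (hk : 4 * σ < k) :
    (∑ v ∈ B, #(privateEdges G A v) : ℝ) ≤ #(scarceTriples G A A B C k) + σ * (#A * #A) := by
  classical
  have hprivate : ∑ v ∈ B, #(privateEdges G A v) =
      ∑ p ∈ A ×ˢ A, #{v ∈ B | p ∈ privateEdges G A v} := by
    refine Eq.trans (sum_congr rfl fun v _ => congr_arg card (ext fun p => ?_))
      (sum_card_bipartiteAbove_eq_sum_card_bipartiteBelow fun v p => p ∈ privateEdges G A v)
    rw [mem_bipartiteAbove, mem_product]
    exact ⟨fun hp => ⟨(mem_privateEdges.1 hp).1, hp⟩, And.right⟩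
  have hscarce : #(scarceTriples G A A B C k) =
      ∑ p ∈ A ×ˢ A, #{v ∈ B | #(commonNonneighbors G C {p.1, p.2, v}) < k} := by
    simp only [scarceTriples, card_filter, sum_product]
  calc (∑ v ∈ B, #(privateEdges G A v) : ℝ)
      = ∑ p ∈ A ×ˢ A, (#{v ∈ B | p ∈ privateEdges G A v} : ℝ) := by exact_mod_cast hprivate
    _ ≤ ∑ p ∈ A ×ˢ A, ((#{v ∈ B | #(commonNonneighbors G C {p.1, p.2, v}) < k} : ℝ) + σ) :=
        sum_le_sum fun p _ => h.card_filter_mem_privateEdges_le hAB hBC hk p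
    _ = #(scarceTriples G A A B C k) + σ * (#A * #A) := by
        rw [sum_add_distrib, sum_const, nsmul_eq_mul, card_product, hscarce]
        push_cast
        ring

end PrivateEdges

variable {V : Type*} [LinearOrder V] {G : SimpleGraph V} {A B C A' B' : Finset V} {α δ η k σ : ℝ}

theorem IsRichPair.exists_subset_card_privateEdges_le [Fintype V] (hTame : Tame G σ)
    (h : IsRichPair G α k A B C A' B') (hα : 0 < α) (hA : A.Nonempty) (hAB : Precedes A B)
    (hBC : Precedes B C) (hσ : σ ≤ α ^ 4 * #B) (hk : 4 * σ < k) :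
    ∃ D ⊆ B', α / 4 * #B ≤ #D ∧ ∀ v ∈ D, α / 2 * #A ≤ #(commonNonneighbors G A' {v}) ∧
      #(privateEdges G A' v) ≤ 8 * α ^ 3 * (#A * #A) := by
  have hA0 : (0 : ℝ) < #A := Nat.cast_pos.2 hA.card_pos
  have hA' : (#A' : ℝ) ≤ #A := Nat.cast_le.2 (card_le_card h.subset_left)
  have hB' : (#B' : ℝ) ≤ #B := Nat.cast_le.2 (card_le_card h.subset_right)
  set M := {v ∈ B' | 8 * α ^ 3 * (#A * #A) < (#(privateEdges G A' v) : ℝ)}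
  set N := {v ∈ B' | α / 2 * #A ≤ (#(commonNonneighbors G A' {v}) : ℝ)}
  have hM : (#M : ℝ) ≤ α / 4 * #B := by
    refine le_of_mul_le_mul_right ?_ (by positivity : 0 < 8 * α ^ 3 * (#A * #A : ℝ))
    calc (#M : ℝ) * (8 * α ^ 3 * (#A * #A)) ≤ ∑ v ∈ B', (#(privateEdges G A' v) : ℝ) :=
          card_filter_lt_mul_le_sum _ (fun _ _ => Nat.cast_nonneg _) _
      _ ≤ #(scarceTriples G A' A' B' C k) + σ * (#A' * #A') :=
          hTame.sum_card_privateEdges_le (hAB.mono h.subset_left h.subset_right)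
            (hBC.mono h.subset_right subset_rfl) hk
      _ ≤ α ^ 4 * (#A * #A * #B) + α ^ 4 * #B * (#A * #A) :=
          add_le_add h.card_scarceTriples_le (by gcongr)
      _ = α / 4 * #B * (8 * α ^ 3 * (#A * #A)) := by ring
  have hN : α / 2 * #B ≤ #N := by
    refine le_of_mul_le_mul_right ?_ hA0
    have hsum := sum_le_card_filter_le_mul_add B' (f := fun v => #(commonNonneighbors G A' {v}))
      (fun v _ => (Nat.cast_le.2 (card_le_card commonNonneighbors_subset)).trans hA')
      (by positivity : 0 ≤ α / 2 * (#A : ℝ))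
    rw [← Nat.cast_sum, sum_card_commonNonneighbors_singleton] at hsum
    linarith [h.le_card_nonadjPairs,
      mul_le_mul_of_nonneg_right hB' (by positivity : 0 ≤ α / 2 * (#A : ℝ))]
  refine ⟨N \ M, sdiff_subset.trans (filter_subset _ _), ?_, fun v hv => ?_⟩
  · have hNM := card_le_card_sdiff_add_card (s := N) (t := M)
    rify at hNM
    linarith
  · obtain ⟨hvN, hvM⟩ := mem_sdiff.1 hv
    obtain ⟨hvB, hv⟩ := mem_filter.1 hvN
    exact ⟨hv, not_lt.1 fun hlt => hvM (mem_filter.2 ⟨hvB, hlt⟩)⟩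

/-- The non-neighbours of `v` before `p` and its neighbours after `p` span only private edges. -/
theorem exists_isSparse_of_card_privateEdges_le {v p : V} {a : ℝ} (hα : 0 < α) (hη : 0 < η)
    (hαη : α ≤ η ^ 2 / 256) (ha : 8 ≤ α * a)
    (hp : (#{x ∈ A' | p < x} : ℝ) ≤ α / 4 * a + 1)
    (hnon : α / 2 * a ≤ #(commonNonneighbors G A' {v}))
    (hpriv : #(privateEdges G A' v) ≤ 8 * α ^ 3 * (a * a))
    (hadj : η * α / 4 * a ≤ #(nbrs G {x ∈ A' | p < x} v)) :
    ∃ X ⊆ A', ∃ Y ⊆ A', Precedes X Y ∧ IsSparse G η X Y ∧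
      α / 8 * a ≤ #X ∧ η * α / 4 * a ≤ #Y := by
  classical
  have ha₀ : 0 < a := pos_of_mul_pos_right (by linarith : 0 < α * a) hα.le
  set X := {x ∈ commonNonneighbors G A' {v} | x ≤ p}
  set Y := {y ∈ nbrs G A' v | p < y}
  have hY : η * α / 4 * a ≤ #Y := by
    refine hadj.trans_eq (congr_arg _ (congr_arg card (ext fun y => ?_)))
    simp only [Y, mem_nbrs, mem_filter, and_right_comm]
  have hX : α / 8 * a ≤ #X := by
    have hsplit : #(commonNonneighbors G A' {v}) ≤ #X + #{x ∈ A' | p < x} :=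
      card_le_card_add_card fun x hx => (le_or_gt x p).imp (fun hxp => mem_filter.2 ⟨hx, hxp⟩)
        fun hpx => mem_filter.2 ⟨commonNonneighbors_subset hx, hpx⟩
    rify at hsplit
    linarith
  have hXY : Precedes X Y := precedes_filter_le_filter_lt _ _ p
  have hsub : G.interedges X Y ⊆ privateEdges G A' v := fun q hq => by
    obtain ⟨hqX, hqY, hq⟩ := Rel.mem_interedges_iff.1 hq
    obtain ⟨hq₁, hq₁v⟩ := mem_commonNonneighbors.1 (mem_filter.1 hqX).1
    obtain ⟨hq₂, hvq₂⟩ := mem_nbrs.1 (mem_filter.1 hqY).1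
    exact mem_privateEdges.2 ⟨⟨hq₁, hq₂⟩, hXY hqX hqY, hq, fun h => hq₁v v rfl h.symm, hvq₂.symm⟩
  refine ⟨X, (filter_subset _ _).trans commonNonneighbors_subset, Y,
    fun y hy => (mem_nbrs.1 (mem_filter.1 hy).1).1, hXY, ?_, hX, hY⟩
  calc (#(G.interedges X Y) : ℝ) ≤ #(privateEdges G A' v) := Nat.cast_le.2 (card_le_card hsub)
    _ ≤ 8 * α ^ 3 * (a * a) := hpriv
    _ = 256 * α * (α ^ 2 * (a * a) / 32) := by ring
    _ ≤ η ^ 2 * (α ^ 2 * (a * a) / 32) := by gcongr; linarith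
    _ = η * (α / 8 * a * (η * α / 4 * a)) := by ring
    _ ≤ η * (#X * #Y) := by gcongr

/-- Three consecutive sets of size at least `s` for which a proportion of at least `ε` of the
triples are independent. -/
structure DenseTriple (G : SimpleGraph V) (ε s : ℝ) (A B C : Finset V) : Prop where
  precedes_left : Precedes A B
  precedes_right : Precedes B C
  le_card_left : s ≤ #A
  le_card_middle : s ≤ #B
  le_card_right : s ≤ #C
  le_card_indepTriples : ε * (#A * #B * #C) ≤ #(indepTriples G A B C)

theorem DenseTriple.of_isLargePart {ε ε' ρ s : ℝ} {X Y : Finset V} (h : DenseTriple G ε s A B C)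
    (hρ : 0 ≤ ρ) (hρ' : ρ ≤ 1) (hB : B.Nonempty) (hX : IsLargePart ρ X A)
    (hY : IsLargePart ρ Y A ∨ IsLargePart ρ Y B) (hXY : Precedes X Y)
    (hdense : ε' * (#X * #Y * #C) ≤ #(indepTriples G X Y C)) :
    DenseTriple G ε' (ρ * s) X Y C where
  precedes_left := hXY
  precedes_right := hY.elim
    (fun hY => (h.precedes_left.trans h.precedes_right hB).mono hY.subset subset_rfl)
    fun hY => h.precedes_right.mono hY.subset subset_rfl
  le_card_left := hX.mul_le_card hρ h.le_card_left
  le_card_middle := hY.elim (·.mul_le_card hρ h.le_card_left) (·.mul_le_card hρ h.le_card_middle)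
  le_card_right := (mul_le_mul_of_nonneg_left h.le_card_right hρ).trans
    (mul_le_of_le_one_left (Nat.cast_nonneg _) hρ')
  le_card_indepTriples := hdense

theorem IsRichPair.exists_isSparse [Fintype V] (hTame : Tame G σ)
    (h : IsRichPair G α k A B C A' B') (hα : 0 < α) (hη : 0 < η)
    (hαη : α ≤ η ^ 2 / 256) (hA : 8 ≤ α * #A) (hB : B.Nonempty) (hAB : Precedes A B)
    (hBC : Precedes B C) (hσ : σ ≤ α ^ 4 * #B) (hk : 4 * σ < k) :
    ∃ X ⊆ A', ∃ Y, Precedes X Y ∧ IsSparse G η X Y ∧ α / 8 * #A ≤ #X ∧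
      (Y ⊆ A' ∧ η * α / 4 * #A ≤ #Y ∨ Y ⊆ B' ∧ α / 4 * #B ≤ #Y) := by
  have hA0 : (0 : ℝ) < #A := pos_of_mul_pos_right (by linarith : 0 < α * #A) hα.le
  obtain ⟨D, hDB, hD, hDgood⟩ :=
    h.exists_subset_card_privateEdges_le hTame hα (card_pos.1 (Nat.cast_pos.1 hA0)) hAB hBC hσ hk
  have hceil := Nat.le_ceil (α / 4 * #A)
  have hceil' := (Nat.ceil_lt_add_one (by positivity : 0 ≤ α / 4 * (#A : ℝ))).le
  obtain ⟨p, hp⟩ := exists_card_filter_lt_eq A' (k := ⌈α / 4 * (#A : ℝ)⌉₊) (by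
    rify
    linarith [h.le_card_left hB])
  rw [← hp] at hceil hceil'
  by_cases hcase : ∃ v ∈ D, η * α / 4 * #A ≤ #(nbrs G {x ∈ A' | p < x} v)
  · obtain ⟨v, hv, hvX⟩ := hcase
    obtain ⟨X, hX, Y, hY, hXY, hsparse, hXc, hYc⟩ := exists_isSparse_of_card_privateEdges_le hα hη
      hαη hA hceil' (hDgood v hv).1 (hDgood v hv).2 hvX
    exact ⟨X, hX, Y, hXY, hsparse, hXc, .inl ⟨hY, hYc⟩⟩
  · push Not at hcase
    refine ⟨{x ∈ A' | p < x}, filter_subset _ _, D,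
      hAB.mono ((filter_subset _ _).trans h.subset_left) (hDB.trans h.subset_right),
      (isSparse_of_card_nbrs_le fun v hv => ?_).symm, ?_, .inr ⟨hDB, hD⟩⟩
    · linarith [hcase v hv, mul_le_mul_of_nonneg_left hceil hη.le]
    · linarith

theorem IsRichPair.exists_isSparse_le_card_indepTriples [Fintype V] (hTame : Tame G σ)
    (h : IsRichPair G α (δ * #C) A B C A' B') (hα : 0 < α) (hδ : 0 ≤ δ) (hη : 0 < η)
    (hη4 : η ≤ 1 / 4) (hαη : α ≤ η ^ 2 / 256) (hAB : Precedes A B) (hBC : Precedes B C)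
    (hσA : σ ≤ α / 8 * #A) (hσB : σ ≤ α ^ 4 * #B) (hσC : σ ≤ δ / 8 * #C) :
    ∃ X ⊆ A, ∃ Y, Precedes X Y ∧ IsSparse G η X Y ∧ α / 8 * #A ≤ #X ∧
      (Y ⊆ A ∧ η * α / 4 * #A ≤ #Y ∨ Y ⊆ B ∧ α / 4 * #B ≤ #Y) ∧
      δ / 2 * (#X * #Y * #C) ≤ #(indepTriples G X Y C) := by
  have hαη' : α ≤ η / 128 := hαη.trans (by nlinarith)
  have hσ := hTame.one_le
  have hA : A.Nonempty := hTame.nonempty_of_le_mul_card hσA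
  have hB : B.Nonempty := hTame.nonempty_of_le_mul_card hσB
  obtain ⟨X, hX, Y, hXY, hsparse, hXc, ⟨hY, hYc⟩ | ⟨hY, hYc⟩⟩ :=
    h.exists_isSparse hTame hα hη hαη (by linarith) hB hAB hBC hσB (by linarith)
  · refine ⟨X, hX.trans h.subset_left, Y, hXY, hsparse, hXc, .inl ⟨hY.trans h.subset_left, hYc⟩,
      le_card_indepTriples hX hY hδ (hsparse.mono hη4) ?_⟩
    calc (#(scarcePairs G A' A' C (δ * #C)) : ℝ) ≤ α ^ 3 * (#A * #A) :=
          h.card_scarcePairs_left_le hα hA hB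
      _ = 1 / 4 * (α / 8 * #A * (128 * α * α / 4 * #A)) := by ring
      _ ≤ 1 / 4 * (α / 8 * #A * (η * α / 4 * #A)) := by gcongr; linarith
      _ ≤ 1 / 4 * (#X * #Y) := by gcongr
  · refine ⟨X, hX.trans h.subset_left, Y, hXY, hsparse, hXc, .inr ⟨hY.trans h.subset_right, hYc⟩,
      le_card_indepTriples hX hY hδ (hsparse.mono hη4) ?_⟩
    calc (#(scarcePairs G A' B' C (δ * #C)) : ℝ) ≤ α ^ 3 * (#A * #B) :=
          h.card_scarcePairs_le hα hA hB
      _ = 1 / 4 * (α / 8 * #A * (128 * α * α / 4 * #B)) := by ring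
      _ ≤ 1 / 4 * (α / 8 * #A * (1 * α / 4 * #B)) := by gcongr; linarith
      _ ≤ 1 / 4 * (#X * #Y) := by gcongr; linarith

theorem DenseTriple.exists_isSparse_of_isRichPair [Fintype V] {ε s : ℝ} (hTame : Tame G σ)
    (h : DenseTriple G ε s A B C) (hrich : IsRichPair G α (δ * #C) A B C A' B') (hα : 0 < α)
    (hδ : 0 < δ) (hδ1 : δ ≤ 1) (hη : 0 < η) (hη4 : η ≤ 1 / 4) (hαη : α ≤ η ^ 2 / 256)
    (hσ : σ ≤ α ^ 4 * δ / 8 * s) :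
    ∃ X Y, IsLargePart (α ^ 4 * δ / 8) X A ∧
      (IsLargePart (α ^ 4 * δ / 8) Y A ∨ IsLargePart (α ^ 4 * δ / 8) Y B) ∧ IsSparse G η X Y ∧
        DenseTriple G (δ / 2) (α ^ 4 * δ / 8 * s) X Y C := by
  have hαη' : α ≤ η / 64 := hαη.trans (by nlinarith)
  have hα4 : α ^ 4 ≤ α ^ 2 := pow_le_pow_of_le_one hα.le (by linarith) (by norm_num)
  have hα2 : α ^ 2 ≤ α * (η / 64) := by rw [sq]; gcongr
  have hα2' : α * η ≤ α := mul_le_of_le_one_right hα.le (by linarith)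
  have hρα : α ^ 4 * δ ≤ α ^ 4 := mul_le_of_le_one_right (by positivity) hδ1
  have hρδ : α ^ 4 * δ ≤ δ := mul_le_of_le_one_left hδ.le (by linarith)
  set ρ := α ^ 4 * δ / 8 with hρ_eq
  have hρ : 0 < ρ := by positivity
  have hlarge {r : ℝ} {D : Finset V} (hr : ρ ≤ r) (hD : s ≤ #D) : σ ≤ r * #D :=
    hTame.le_mul_card hρ hσ hr hD
  have hle {r : ℝ} {D E : Finset V} (hr : ρ ≤ r) (hD : E ⊆ D) (hE : r * #D ≤ #E) :
      IsLargePart ρ E D :=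
    ⟨hD, (mul_le_mul_of_nonneg_right hr (Nat.cast_nonneg _)).trans hE⟩
  obtain ⟨X, hX, Y, hXY, hsparse, hXc, hY, hdense⟩ :=
    hrich.exists_isSparse_le_card_indepTriples hTame hα hδ.le hη hη4 hαη h.precedes_left
      h.precedes_right (hlarge (by linarith) h.le_card_left)
      (hlarge (by linarith [pow_pos hα 4]) h.le_card_middle)
      (hlarge (by linarith) h.le_card_right)
  have hρη : ρ ≤ η * α / 4 := by linarith [mul_pos hα hη]
  have hXA : IsLargePart ρ X A := hle (by linarith) hX hXc
  have hYAB : IsLargePart ρ Y A ∨ IsLargePart ρ Y B :=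
    hY.imp (fun hY => hle hρη hY.1 hY.2) fun hY => hle (by linarith) hY.1 hY.2
  exact ⟨X, Y, hXA, hYAB, hsparse, h.of_isLargePart hρ.le (by linarith)
    (hTame.nonempty_of_le_mul_card (hlarge le_rfl h.le_card_middle)) hXA hYAB hXY hdense⟩

theorem DenseTriple.exists_isSparse (ε : ℝ) (hε : 0 < ε) :
    ∃ ε' : ℝ, 0 < ε' ∧ ∀ η : ℝ, 0 < η → ∃ ρ : ℝ, 0 < ρ ∧ ρ ≤ 1 ∧
      ∀ {V : Type u} [LinearOrder V] [Fintype V] {G : SimpleGraph V} {σ s : ℝ} {A B C : Finset V},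
        Tame G σ → σ ≤ ρ * s → DenseTriple G ε s A B C →
        ∃ X Y, IsLargePart ρ X A ∧ (IsLargePart ρ Y A ∨ IsLargePart ρ Y B) ∧ IsSparse G η X Y ∧
          DenseTriple G ε' (ρ * s) X Y C := by
  obtain ⟨δ, hδ0, hδ1, hδ⟩ := exists_isRichPair.{u} ε hε
  refine ⟨δ / 2, by positivity, fun η hη => ?_⟩
  have hη' : 0 < min η (1 / 4) := lt_min hη (by norm_num)
  have hη4 : min η (1 / 4) ≤ 1 / 4 := min_le_right _ _
  obtain ⟨α, hα0, hα1, hα⟩ := hδ (min η (1 / 4) ^ 2 / 256) (by positivity)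
  have hρ : α ^ 4 * δ / 8 ≤ 1 := by
    have hα4 : α ^ 4 ≤ 1 := pow_le_one₀ hα0.le (by nlinarith)
    linarith [mul_le_one₀ hα4 hδ0.le hδ1]
  refine ⟨α ^ 4 * δ / 8, by positivity, hρ, fun {V} _ _ G σ s A B C hTame hσ h => ?_⟩
  have hpos {D : Finset V} (hD : s ≤ #D) : D.Nonempty :=
    hTame.nonempty_of_le_mul_card (hTame.le_mul_card (by positivity) hσ le_rfl hD)
  obtain ⟨A', B', hrich⟩ := hα G A B C (hpos h.le_card_left) (hpos h.le_card_middle)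
    (hpos h.le_card_right) h.le_card_indepTriples
  obtain ⟨X, Y, hX, hY, hsparse, hXYC⟩ := h.exists_isSparse_of_isRichPair hTame hrich hα0 hδ0 hδ1
    hη' hη4 hα1 hσ
  exact ⟨X, Y, hX, hY, hsparse.mono (min_le_left _ _), hXYC⟩

end SparsePairs

section SparseMiddle

variable {V : Type*} [LinearOrder V] [Fintype V] {G : SimpleGraph V}
  {A B C X Y A' B' : Finset V} {α δ σ : ℝ}

theorem Tame.card_lt_of_forall_le_card_commonNonneighbors (h : Tame G σ) (hδ : 0 < δ) {u : V}
    (hX : ∀ x ∈ X, u < x ∧ G.Adj u x) (hC : ∀ x ∈ X, δ * #C ≤ #(commonNonneighbors G C {u, x}))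
    (hu : (#(nbrs G B u) : ℝ) ≤ 1 / 10 * #B) (dXB : ∀ x ∈ X, (#(nbrs G B x) : ℝ) ≤ 1 / 10 * #B)
    (hXB : Precedes X B) (hBC : Precedes B C) (sBC : IsSparse G (δ / 20) B C)
    (hσB : 800 * σ ≤ #B) (hσC : 800 * σ ≤ δ * #C) : (#X : ℝ) < σ := by
  by_contra! hσX
  have hσ := h.one_le
  have hC0 : (0 : ℝ) < #C := pos_of_mul_pos_right (by linarith : 0 < δ * #C) hδ.le
  obtain ⟨B₀, hB₀, hB₀c, dB₀⟩ :=
    sBC.exists_subset_card_nbrs_le (Nat.cast_pos.1 hC0) (k := δ / 2) (by positivity)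
  have hratio : δ / 20 / (δ / 2) = 1 / 10 := by field_simp; norm_num
  rw [hratio] at hB₀c
  set S := commonNonneighbors G B₀ {u}
  have hSB : S ⊆ B := commonNonneighbors_subset.trans hB₀
  obtain ⟨x, hx, hun⟩ := h.exists_card_unreached_le_four_mul (hXB.mono subset_rfl hSB) hσX
  have hr : σ ≤ #(commonNonneighbors G (reached G S {x}) {x}) := by
    have hS := card_le_card_commonNonneighbors_singleton (G := G) B₀ u
    have hsplit : #S ≤ #(reached G S {x}) + #(unreached G S {x}) :=
      card_le_card_add_card fun y hy => mem_reached_or_mem_unreached hy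
    have hreached := card_le_card_commonNonneighbors_singleton (G := G) (reached G S {x}) x
    have hdu := card_le_card (nbrs_subset_nbrs (G := G) (v := u) hB₀)
    have hdx := card_le_card (nbrs_subset_nbrs (G := G) (v := x)
      fun y (hy : y ∈ reached G S {x}) => hSB (mem_reached.1 hy).1)
    rify at hS hsplit hreached hdu hdx
    linarith [dXB x hx]
  have huS : ∀ y ∈ S, ¬ G.Adj u y := fun y hy =>
    (mem_commonNonneighbors.1 hy).2 u (Set.mem_singleton u)
  obtain ⟨v, hv, hvC⟩ := h.exists_card_commonNonneighbors_le (S := S) (C := C) (hX x hx).1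
    (hX x hx).2 huS (hBC.mono hSB subset_rfl) hr
  have hCv := card_commonNonneighbors_le (G := G) C {u, x} v
  rw [Set.insert_comm v u, Set.pair_comm v x] at hCv
  rify at hCv
  linarith [hC x hx, dB₀ v (commonNonneighbors_subset hv)]

theorem Tame.sum_card_nbrs_le (h : Tame G σ) (hδ : 0 < δ) (hXY : Precedes X Y)
    (hYB : Precedes Y B) (hBC : Precedes B C) (dX : ∀ x ∈ X, (#(nbrs G B x) : ℝ) ≤ 1 / 10 * #B)
    (dY : ∀ y ∈ Y, (#(nbrs G B y) : ℝ) ≤ 1 / 10 * #B) (sBC : IsSparse G (δ / 20) B C)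
    (hσB : 800 * σ ≤ #B) (hσC : 800 * σ ≤ δ * #C) :
    ∑ u ∈ X, (#(nbrs G Y u) : ℝ) ≤ #(scarcePairs G X Y C (δ * #C)) + σ * #X := by
  have hscarce : #(scarcePairs G X Y C (δ * #C)) =
      ∑ u ∈ X, #{x ∈ Y | #(commonNonneighbors G C {u, x}) < δ * #C} := by
    simp only [scarcePairs, card_filter, sum_product]
  have hnbrs (u) (hu : u ∈ X) : (#(nbrs G Y u) : ℝ) ≤
      #{x ∈ Y | #(commonNonneighbors G C {u, x}) < δ * #C} + σ := by
    set R := {x ∈ nbrs G Y u | δ * #C ≤ #(commonNonneighbors G C {u, x})}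
    have hsplit : #(nbrs G Y u) ≤
        #{x ∈ Y | #(commonNonneighbors G C {u, x}) < δ * #C} + #R :=
      card_le_card_add_card fun x hx => (lt_or_ge _ _).imp
        (fun hlt => mem_filter.2 ⟨(mem_nbrs.1 hx).1, hlt⟩) fun hge => mem_filter.2 ⟨hx, hge⟩
    have hRY : ∀ x ∈ R, x ∈ Y ∧ G.Adj u x := fun x hx => mem_nbrs.1 (mem_filter.1 hx).1
    have hlt : (#R : ℝ) < σ := h.card_lt_of_forall_le_card_commonNonneighbors hδ
      (fun x hx => ⟨hXY hu (hRY x hx).1, (hRY x hx).2⟩) (fun x hx => (mem_filter.1 hx).2)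
      (dX u hu) (fun x hx => dY x (hRY x hx).1)
      (hYB.mono (fun x hx => (hRY x hx).1) subset_rfl) hBC sBC hσB hσC
    rify at hsplit
    linarith
  calc ∑ u ∈ X, (#(nbrs G Y u) : ℝ)
      ≤ ∑ u ∈ X, ((#{x ∈ Y | #(commonNonneighbors G C {u, x}) < δ * #C} : ℝ) + σ) :=
        sum_le_sum hnbrs
    _ = #(scarcePairs G X Y C (δ * #C)) + σ * #X := by
        rw [sum_add_distrib, sum_const, nsmul_eq_mul, mul_comm σ, hscarce]
        push_cast
        ring

theorem IsRichPair.exists_isSparse_left (hTame : Tame G σ)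
    (h : IsRichPair G α (δ * #C) A B C A' B') (hα : 0 < α) (hα' : α ≤ 1 / 3200) (hδ : 0 < δ)
    (hAB : Precedes A B) (hBC : Precedes B C) (sAB : IsSparse G (α / 800) A B)
    (sBC : IsSparse G (δ / 20) B C) (hA : 4 * σ ≤ α * #A) (hσA : σ ≤ α ^ 3 * #A)
    (hσB : 800 * σ ≤ #B) (hσC : 800 * σ ≤ δ * #C) :
    ∃ X ⊆ A', ∃ Y ⊆ A', Precedes X Y ∧ IsSparse G (1 / 100) X Y ∧
      α / 4 * #A ≤ #X ∧ α / 4 * #A ≤ #Y := by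
  have hσ := hTame.one_le
  have hAne : A.Nonempty := hTame.nonempty_of_le_mul_card hσA
  have hB : B.Nonempty := card_pos.1 (Nat.cast_pos.1 (by linarith : (0 : ℝ) < #B))
  obtain ⟨D, hD, hDc, dD⟩ := h.exists_subset_card_nbrs_le hα.le hB sAB
  obtain ⟨p, hX, hY⟩ := exists_card_filter_le_eq_half D
    (by exact_mod_cast (by linarith : (2 : ℝ) ≤ #D))
  set X := {x ∈ D | x ≤ p}
  set Y := {x ∈ D | p < x}
  have hXD : X ⊆ D := filter_subset _ _
  have hYD : Y ⊆ D := filter_subset _ _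
  have hX : α / 4 * #A ≤ #X := by linarith
  have hY : α / 4 * #A ≤ #Y := by linarith
  have hXY : Precedes X Y := precedes_filter_le_filter_lt D D p
  refine ⟨X, hXD.trans hD, Y, hYD.trans hD, hXY, ?_, hX, hY⟩
  have hDA : D ⊆ A := hD.trans h.subset_left
  have hXA : (#X : ℝ) ≤ #A := Nat.cast_le.2 (card_le_card (hXD.trans hDA))
  have hscarce := card_le_card (scarcePairs_subset_scarcePairs (G := G) (C := C)
    (k := δ * #C) (hXD.trans hD) (hYD.trans hD))
  rify at hscarce
  rw [isSparse_iff_sum_card_nbrs_le]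
  calc ∑ x ∈ X, (#(nbrs G Y x) : ℝ) ≤ #(scarcePairs G X Y C (δ * #C)) + σ * #X :=
        hTame.sum_card_nbrs_le hδ hXY (hAB.mono (hYD.trans hDA) subset_rfl) hBC
          (fun x hx => dD x (hXD hx)) (fun y hy => dD y (hYD hy)) sBC hσB hσC
    _ ≤ α ^ 3 * (#A * #A) + α ^ 3 * #A * #A := add_le_add
        (hscarce.trans (h.card_scarcePairs_left_le hα hAne hB)) (by gcongr)
    _ = 1 / 100 * (3200 * α * (α / 4 * #A * (α / 4 * #A))) := by ring
    _ ≤ 1 / 100 * (1 * (#X * #Y)) := by gcongr; linarith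
    _ = 1 / 100 * (#X * #Y) := by ring

theorem IsRichPair.false_of_isSparse (hTame : Tame G σ)
    (h : IsRichPair G α (δ * #C) A B C A' B') (hα : 0 < α) (hα' : α ≤ 1 / 3200) (hδ : 0 < δ)
    (hAB : Precedes A B) (hBC : Precedes B C) (sAB : IsSparse G (α / 800) A B)
    (sBC : IsSparse G (δ / 20) B C) (hσA : σ ≤ α ^ 3 * #A) (hσB : 800 * σ ≤ #B)
    (hσC : 800 * σ ≤ δ * #C) : False := by
  have hσ := hTame.one_le
  have hα3 : α ^ 3 ≤ α / 3200 :=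
    (pow_le_pow_of_le_one hα.le (by linarith) (by norm_num : 2 ≤ 3)).trans (by nlinarith)
  have hσα := mul_le_mul_of_nonneg_right hα3 (Nat.cast_nonneg (α := ℝ) #A)
  obtain ⟨X, hX, Y, hY, hXY, sXY, hXc, hYc⟩ := h.exists_isSparse_left hTame hα hα' hδ hAB hBC
    sAB sBC (by linarith) hσA hσB hσC
  have sparse_of_subset {Z : Finset V} (hZ : Z ⊆ A') (hZc : α / 4 * #A ≤ #Z) :
      IsSparse G (1 / 100) Z B :=
    sAB.subset (hZ.trans h.subset_left) subset_rfl (by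
      have hαAB : 0 ≤ α * #A * #B := by positivity
      linarith [mul_le_mul_of_nonneg_right hZc (Nat.cast_nonneg (α := ℝ) #B)])
  exact hTame.false_of_isSparse hXY (hAB.mono (hY.trans h.subset_left) subset_rfl)
    (by linarith) (by linarith) (by linarith) sXY (sparse_of_subset hX hXc)
    (sparse_of_subset hY hYc)

end SparseMiddle

theorem DenseTriple.exists_not_isSparse_of_isSparse_left (ε : ℝ) (hε : 0 < ε) :
    ∃ κ : ℝ, 0 < κ ∧ ∀ {V : Type u} [LinearOrder V] [Fintype V] {G : SimpleGraph V} {σ s : ℝ}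
      {A B C : Finset V}, Tame G σ → σ ≤ κ * s → DenseTriple G ε s A B C →
      IsSparse G κ A B → ¬ IsSparse G κ B C := by
  obtain ⟨δ, hδ0, hδ1, hδ⟩ := exists_isRichPair.{u} ε hε
  obtain ⟨α, hα0, hα1, hα⟩ := hδ (1 / 3200) (by norm_num)
  have hκα : α ^ 3 * δ ≤ α ^ 3 := mul_le_of_le_one_right (by positivity) hδ1
  have hκδ : α ^ 3 * δ ≤ δ :=
    mul_le_of_le_one_left hδ0.le (pow_le_one₀ hα0.le (by linarith))
  have hα3 : α ^ 3 ≤ α := pow_le_of_le_one hα0.le (by linarith) (by norm_num)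
  refine ⟨α ^ 3 * δ / 800, by positivity, fun {V} _ _ G σ s A B C hTame hσ h sAB sBC => ?_⟩
  have hlarge {r : ℝ} {D : Finset V} (hr : α ^ 3 * δ / 800 ≤ r) (hD : s ≤ #D) : σ ≤ r * #D :=
    hTame.le_mul_card (by positivity) hσ hr hD
  have hpos {D : Finset V} (hD : s ≤ #D) : D.Nonempty :=
    hTame.nonempty_of_le_mul_card (hlarge le_rfl hD)
  obtain ⟨A', B', hrich⟩ := hα G A B C (hpos h.le_card_left) (hpos h.le_card_middle)
    (hpos h.le_card_right) h.le_card_indepTriples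
  refine hrich.false_of_isSparse hTame hα0 hα1 hδ0 h.precedes_left h.precedes_right
    (sAB.mono (by linarith)) (sBC.mono (by linarith)) (hlarge ?_ h.le_card_left) ?_ ?_
  · linarith [pow_pos hα0 3]
  · linarith [hlarge (by linarith : _ ≤ (1 / 800 : ℝ)) h.le_card_middle]
  · linarith [hlarge (by linarith : _ ≤ δ / 800) h.le_card_right]

section Dual

variable {V : Type*} {G : SimpleGraph V} {A B C : Finset V}

theorem card_indepTriples_reverse (G : SimpleGraph V) (A B C : Finset V) :
    #(indepTriples G C B A) = #(indepTriples G A B C) := by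
  refine card_bij' (fun τ _ => (τ.2.2, τ.2.1, τ.1)) (fun τ _ => (τ.2.2, τ.2.1, τ.1))
    (fun τ hτ => ?_) (fun τ hτ => ?_) (fun _ _ => rfl) fun _ _ => rfl <;>
  · simp only [mem_indepTriples] at hτ ⊢
    simp only [G.adj_comm] at hτ ⊢
    tauto

variable [LinearOrder V] {ε s σ : ℝ}

/-- The reverse order on the type `V` itself, so that graphs and finsets need no transport
to `Vᵒᵈ`. -/
abbrev reverseOrder (V : Type*) [LinearOrder V] : LinearOrder V :=
  inferInstanceAs (LinearOrder Vᵒᵈ)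

theorem precedes_reverseOrder_iff : @Precedes V (reverseOrder V) A B ↔ Precedes B A :=
  forall₂_comm

theorem Tame.reverse [Fintype V] (h : Tame G σ) : @Tame V (reverseOrder V) _ G σ := by
  refine @Tame.mk V (reverseOrder V) _ G σ ?_ ?_
  · intro a b c d e hab hbc hcd hde ab bc cd de ac ad ae bd be ce
    exact h.noPath e d c b a hde hcd hbc hab de.symm cd.symm bc.symm ab.symm
      (ce ·.symm) (be ·.symm) (ae ·.symm) (bd ·.symm) (ad ·.symm) (ac ·.symm)
  · obtain ⟨t, ht, hole, hσ⟩ := h.exists_holeFree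
    refine ⟨t, ht, fun X Y hXY hX hY => ?_, hσ⟩
    obtain ⟨y, hy, x, hx, hyx⟩ := hole (precedes_reverseOrder_iff.1 hXY) hY hX
    exact ⟨x, hx, y, hy, hyx.symm⟩

theorem denseTriple_reverseOrder_iff :
    @DenseTriple V (reverseOrder V) G ε s C B A ↔ DenseTriple G ε s A B C := by
  have hcard : ε * (#C * #B * #A) ≤ #(indepTriples G C B A) ↔
      ε * (#A * #B * #C) ≤ #(indepTriples G A B C) := by
    rw [card_indepTriples_reverse, mul_comm (#A * #B : ℝ), mul_comm (#A : ℝ), mul_assoc (#C : ℝ)]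
  constructor
  · rintro ⟨hCB, hBA, hC, hB, hA, h⟩
    exact ⟨precedes_reverseOrder_iff.1 hBA, precedes_reverseOrder_iff.1 hCB, hA, hB, hC, hcard.1 h⟩
  · rintro ⟨hAB, hBC, hA, hB, hC, h⟩
    exact @DenseTriple.mk V (reverseOrder V) G ε s C B A (precedes_reverseOrder_iff.2 hBC)
      (precedes_reverseOrder_iff.2 hAB) hC hB hA (hcard.2 h)

theorem DenseTriple.exists_isSparse_right (ε : ℝ) (hε : 0 < ε) :
    ∃ ε' : ℝ, 0 < ε' ∧ ∀ η : ℝ, 0 < η → ∃ ρ : ℝ, 0 < ρ ∧ ρ ≤ 1 ∧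
      ∀ {V : Type u} [LinearOrder V] [Fintype V] {G : SimpleGraph V} {σ s : ℝ} {A B C : Finset V},
        Tame G σ → σ ≤ ρ * s → DenseTriple G ε s A B C →
        ∃ X Y, (IsLargePart ρ X C ∨ IsLargePart ρ X B) ∧ IsSparse G η X Y ∧
          DenseTriple G ε' (ρ * s) A X Y := by
  obtain ⟨ε', hε', h⟩ := DenseTriple.exists_isSparse.{u} ε hε
  refine ⟨ε', hε', fun η hη => ?_⟩
  obtain ⟨ρ, hρ, hρ1, h⟩ := h η hη
  refine ⟨ρ, hρ, hρ1, fun {V} _ _ G σ s A B C hTame hσ hABC => ?_⟩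
  obtain ⟨Y, X, -, hX, hsparse, hYXA⟩ :=
    @h V (reverseOrder V) _ G σ s C B A hTame.reverse hσ (denseTriple_reverseOrder_iff.2 hABC)
  exact ⟨X, Y, hX, hsparse.symm, denseTriple_reverseOrder_iff.1 hYXA⟩

end Dual

section DenseTriple

theorem DenseTriple.exists_not_isSparse_of_isSparse_right (ε : ℝ) (hε : 0 < ε) :
    ∃ κ : ℝ, 0 < κ ∧ ∀ {V : Type u} [LinearOrder V] [Fintype V] {G : SimpleGraph V} {σ s : ℝ}
      {A B C D : Finset V}, Tame G σ → σ ≤ κ * s → DenseTriple G ε s A B C → IsSparse G κ B C →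
      Precedes A D → s ≤ #D → ¬ IsSparse G κ A D := by
  obtain ⟨ε', hε', hpair⟩ := DenseTriple.exists_isSparse.{u} ε hε
  obtain ⟨κ', hκ', hfalse⟩ := DenseTriple.exists_not_isSparse_of_isSparse_left.{u} ε' hε'
  obtain ⟨ρ, hρ, hρ1, hpair⟩ := hpair (min κ' (1 / 100)) (by positivity)
  set θ := min κ' (1 / 100)
  have hθ : 0 < θ := by positivity
  refine ⟨θ * ρ, by positivity, fun {V} _ _ G σ s A B C D hTame hσ hABC hBC hAD hD sAD => ?_⟩
  have hs : 0 < s := hTame.pos_of_le_mul (by positivity) hσ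
  have hθκ : θ * (ρ * s) ≤ κ' * (ρ * s) := by gcongr; exact min_le_left _ _
  have hθ100 : θ * (ρ * s) ≤ 1 / 100 * (ρ * s) := by gcongr; exact min_le_right _ _
  have hθρ : θ * (ρ * s) ≤ ρ * s := by linarith [mul_pos hρ hs]
  obtain ⟨X, Y, hXA, hYA | hYB, sXY, hXYC⟩ := hpair hTame (by linarith) hABC
  · exact hTame.false_of_isSparse hXYC.precedes_left (hAD.mono hYA.subset subset_rfl)
      (by linarith [hXYC.le_card_left]) (by linarith [hXYC.le_card_middle])
      (by linarith [mul_le_of_le_one_left hs.le hρ1]) (sXY.mono (min_le_right _ _))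
      ((sAD.of_isLargePart_left hXA hθ.le le_rfl).mono (min_le_right _ _))
      ((sAD.of_isLargePart_left hYA hθ.le le_rfl).mono (min_le_right _ _))
  · exact hfalse hTame (by linarith) hXYC (sXY.mono (min_le_left _ _))
      ((hBC.of_isLargePart_left hYB hθ.le le_rfl).mono (min_le_left _ _))

theorem DenseTriple.exists_not_isSparse (ε : ℝ) (hε : 0 < ε) :
    ∃ κ : ℝ, 0 < κ ∧ ∀ {V : Type u} [LinearOrder V] [Fintype V] {G : SimpleGraph V} {σ s : ℝ}
      {A B C : Finset V}, Tame G σ → σ ≤ κ * s → DenseTriple G ε s A B C →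
      ¬ IsSparse G κ A B := by
  obtain ⟨ε', hε', hpair⟩ := DenseTriple.exists_isSparse_right.{u} ε hε
  obtain ⟨κ₁, hκ₁, hfalse₁⟩ := DenseTriple.exists_not_isSparse_of_isSparse_left.{u} ε' hε'
  obtain ⟨κ₂, hκ₂, hfalse₂⟩ := DenseTriple.exists_not_isSparse_of_isSparse_right.{u} ε' hε'
  obtain ⟨ρ, hρ, hρ1, hpair⟩ := hpair (min κ₁ κ₂) (by positivity)
  set θ := min (min κ₁ κ₂) 1
  have hθ : 0 < θ := by positivity
  refine ⟨θ * ρ, by positivity, fun {V} _ _ G σ s A B C hTame hσ hABC sAB => ?_⟩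
  have hs : 0 < s := hTame.pos_of_le_mul (by positivity) hσ
  have hθ₁ : θ ≤ κ₁ := (min_le_left _ _).trans (min_le_left _ _)
  have hθ₂ : θ ≤ κ₂ := (min_le_left _ _).trans (min_le_right _ _)
  have hθρ : θ * ρ * s ≤ ρ * s := by
    gcongr
    exact mul_le_of_le_one_left hρ.le (min_le_right _ _)
  obtain ⟨X, Y, - | hXB, sXY, hAXY⟩ := hpair hTame (hσ.trans hθρ) hABC
  · refine hfalse₂ hTame ?_ hAXY (sXY.mono (min_le_right _ _)) hABC.precedes_left ?_ ?_
    · exact hσ.trans (by rw [mul_assoc]; gcongr)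
    · exact (mul_le_of_le_one_left hs.le hρ1).trans hABC.le_card_middle
    · exact sAB.mono ((mul_le_of_le_one_right hθ.le hρ1).trans hθ₂)
  · refine hfalse₁ hTame ?_ hAXY ?_ (sXY.mono (min_le_left _ _))
    · exact hσ.trans (by rw [mul_assoc]; gcongr)
    · exact ((sAB.symm.of_isLargePart_left hXB hθ.le le_rfl).symm).mono hθ₁

theorem Tame.exists_not_denseTriple (ε : ℝ) (hε : 0 < ε) :
    ∃ κ : ℝ, 0 < κ ∧ ∀ {V : Type u} [LinearOrder V] [Fintype V] {G : SimpleGraph V} {σ s : ℝ}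
      {A B C : Finset V}, Tame G σ → σ ≤ κ * s → ¬ DenseTriple G ε s A B C := by
  obtain ⟨ε', hε', hpair⟩ := DenseTriple.exists_isSparse.{u} ε hε
  obtain ⟨κ, hκ, hfalse⟩ := DenseTriple.exists_not_isSparse.{u} ε' hε'
  obtain ⟨ρ, hρ, -, hpair⟩ := hpair κ hκ
  set θ := min κ 1
  have hθ : 0 < θ := by positivity
  refine ⟨θ * ρ, by positivity, fun {V} _ _ G σ s A B C hTame hσ hABC => ?_⟩
  have hs : 0 < s := hTame.pos_of_le_mul (by positivity) hσ
  have hσ₁ : θ * ρ * s ≤ ρ * s := by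
    gcongr
    exact mul_le_of_le_one_left hρ.le (min_le_right _ _)
  have hσκ : θ * ρ * s ≤ κ * (ρ * s) := by
    rw [mul_assoc]
    gcongr
    exact min_le_left _ _
  obtain ⟨X, Y, -, -, hsparse, hXYC⟩ := hpair hTame (hσ.trans hσ₁) hABC
  exact hfalse hTame (hσ.trans hσκ) hXYC hsparse

end DenseTriple

section CutPoints

variable {V : Type*} [LinearOrder V] [Fintype V]

section LocallyFinite

variable [LocallyFiniteOrder V] {m : ℕ}

theorem card_filter_card_Ico_lt_le (b : V) (m : ℕ) : #{a | a < b ∧ #(Ico a b) < m} ≤ m := by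
  set S : Finset V := {a | a < b ∧ #(Ico a b) < m}
  rcases S.eq_empty_or_nonempty with hS | hS
  · simp [hS]
  · refine (card_le_card fun a ha => ?_).trans (mem_filter.1 (S.min'_mem hS)).2.2.le
    exact mem_Ico.2 ⟨S.min'_le a ha, (mem_filter.1 ha).2.1⟩

theorem card_filter_card_Ioc_lt_le (b : V) (m : ℕ) : #{c | b < c ∧ #(Ioc b c) < m} ≤ m := by
  set S : Finset V := {c | b < c ∧ #(Ioc b c) < m}
  rcases S.eq_empty_or_nonempty with hS | hS
  · simp [hS]
  · refine (card_le_card fun c hc => ?_).trans (mem_filter.1 (S.max'_mem hS)).2.2.le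
    exact mem_Ioc.2 ⟨(mem_filter.1 hc).2.1, S.le_max' c hc⟩

theorem card_le_card_filter_le_card_Ico_and_le_card_Ioc_add (T : Finset (V × V × V))
    (hT : ∀ τ ∈ T, τ.1 < τ.2.1 ∧ τ.2.1 < τ.2.2) (m : ℕ) :
    #T ≤ #{τ ∈ T | m ≤ #(Ico τ.1 τ.2.1) ∧ m ≤ #(Ioc τ.2.1 τ.2.2)} +
      2 * m * Fintype.card V ^ 2 := by
  have hleft : #{τ ∈ T | #(Ico τ.1 τ.2.1) < m} ≤ m * Fintype.card V ^ 2 := by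
    refine (card_le_mul_card_image_of_maps_to (f := Prod.snd) (t := univ) (fun _ _ => mem_univ _) m
      fun q _ => ?_).trans_eq (by rw [card_univ, Fintype.card_prod, sq])
    refine (card_le_card_of_injOn Prod.fst (fun τ hτ => ?_) fun τ hτ υ hυ h => ?_).trans
      (card_filter_card_Ico_lt_le q.1 m)
    · obtain ⟨hτS, rfl⟩ := mem_filter.1 hτ
      obtain ⟨hτT, hlt⟩ := mem_filter.1 hτS
      exact mem_filter.2 ⟨mem_univ _, (hT τ hτT).1, hlt⟩
    · exact Prod.ext h ((mem_filter.1 hτ).2.trans (mem_filter.1 hυ).2.symm)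
  have hright : #{τ ∈ T | #(Ioc τ.2.1 τ.2.2) < m} ≤ m * Fintype.card V ^ 2 := by
    refine (card_le_mul_card_image_of_maps_to (f := fun τ => (τ.1, τ.2.1)) (t := univ)
      (fun _ _ => mem_univ _) m fun q _ => ?_).trans_eq (by rw [card_univ, Fintype.card_prod, sq])
    refine (card_le_card_of_injOn (·.2.2) (fun τ hτ => ?_) fun τ hτ υ hυ h => ?_).trans
      (card_filter_card_Ioc_lt_le q.2 m)
    · obtain ⟨hτS, rfl⟩ := mem_filter.1 hτ
      obtain ⟨hτT, hlt⟩ := mem_filter.1 hτS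
      exact mem_filter.2 ⟨mem_univ _, (hT τ hτT).2, hlt⟩
    · obtain ⟨h₁, h₂⟩ := Prod.ext_iff.1 ((mem_filter.1 hτ).2.trans (mem_filter.1 hυ).2.symm)
      exact Prod.ext h₁ (Prod.ext h₂ h)
  have hcover : #T ≤ #{τ ∈ T | m ≤ #(Ico τ.1 τ.2.1) ∧ m ≤ #(Ioc τ.2.1 τ.2.2)} +
      (#{τ ∈ T | #(Ico τ.1 τ.2.1) < m} + #{τ ∈ T | #(Ioc τ.2.1 τ.2.2) < m}) := by
    refine (card_le_card_add_card fun τ hτ => ?_).trans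
      (Nat.add_le_add_left (card_union_le _ _) _)
    simp only [mem_union, mem_filter, hτ, true_and, ← not_le]
    tauto
  linarith

/-- Average over the cut points `p` in the first gap and `q` in the second. -/
theorem exists_precedes_le_card_indepTriples [Nonempty V] {G : SimpleGraph V}
    {W : Finset (V × V × V)} {K : ℝ} (hW : W ⊆ indepTriples G univ univ univ)
    (hm : ∀ τ ∈ W, m ≤ #(Ico τ.1 τ.2.1) ∧ m ≤ #(Ioc τ.2.1 τ.2.2))
    (hK : Fintype.card V ^ 2 * K ≤ #W * m ^ 2) :
    ∃ A B C : Finset V, Precedes A B ∧ Precedes B C ∧ K ≤ #(indepTriples G A B C) := by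
  classical
  by_contra! h
  refine hK.not_gt ?_
  calc (#W * m ^ 2 : ℝ) = #W • (m : ℝ) ^ 2 := (nsmul_eq_mul _ _).symm
    _ < #(univ : Finset (V × V)) • K := card_nsmul_lt_card_nsmul_of_le_of_lt
        (fun τ pq => pq.1 ∈ Ico τ.1 τ.2.1 ∧ pq.2 ∈ Ioc τ.2.1 τ.2.2) univ_nonempty
        (fun τ hτ => ?_) fun ⟨p, q⟩ _ => ?_
    _ = Fintype.card V ^ 2 * K := by simp [sq]
  · have hcut : univ.bipartiteAbove
        (fun τ pq => pq.1 ∈ Ico τ.1 τ.2.1 ∧ pq.2 ∈ Ioc τ.2.1 τ.2.2) τ =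
        Ico τ.1 τ.2.1 ×ˢ Ioc τ.2.1 τ.2.2 := by
      ext
      simp [mem_bipartiteAbove]
    rw [hcut, card_product, sq]
    exact_mod_cast Nat.mul_le_mul (hm τ hτ).1 (hm τ hτ).2
  · refine (Nat.cast_le.2 (card_le_card fun τ hτ => ?_)).trans_lt (h {x | x ≤ p}
      {x | p < x ∧ x < q} {x | q ≤ x} (fun x hx y hy => ?_) fun x hx y hy => ?_)
    · obtain ⟨hτW, hp, hq⟩ := (mem_bipartiteBelow _).1 hτ
      rw [mem_Ico] at hp
      rw [mem_Ioc] at hq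
      exact mem_indepTriples.2 ⟨by simp [hp, hq], (mem_indepTriples.1 (hW hτW)).2⟩
    · exact (mem_filter.1 hx).2.trans_lt (mem_filter.1 hy).2.1
    · exact (mem_filter.1 hx).2.2.trans_le (mem_filter.1 hy).2

theorem exists_precedes_mul_card_pow_le_card_indepTriples {G : SimpleGraph V} {ε : ℝ}
    (hε : 0 < ε) (hV : 4 ≤ ε * Fintype.card V)
    (h : ε * Fintype.card V ^ 3 ≤
      #{τ ∈ indepTriples G univ univ univ | τ.1 < τ.2.1 ∧ τ.2.1 < τ.2.2}) :
    ∃ A B C : Finset V, Precedes A B ∧ Precedes B C ∧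
      ε ^ 3 / 128 * Fintype.card V ^ 3 ≤ #(indepTriples G A B C) := by
  set n := Fintype.card V
  have hn0 : (0 : ℝ) < n := pos_of_mul_pos_right (by linarith) hε.le
  have : Nonempty V := Fintype.card_pos_iff.1 (Nat.cast_pos.1 hn0)
  set m := ⌊ε / 4 * (n : ℝ)⌋₊
  have hm_le : (m : ℝ) ≤ ε / 4 * n := Nat.floor_le (by positivity)
  have hm_ge : ε / 8 * n ≤ m := by
    have hm_lt : ε / 4 * n < m + 1 := Nat.lt_floor_add_one _
    have hm_pos : (1 : ℝ) ≤ m := by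
      exact_mod_cast (Nat.one_le_floor_iff _).2 (by linarith : 1 ≤ ε / 4 * n)
    linarith
  set T := {τ ∈ indepTriples G univ univ univ | τ.1 < τ.2.1 ∧ τ.2.1 < τ.2.2}
  set W := {τ ∈ T | m ≤ #(Ico τ.1 τ.2.1) ∧ m ≤ #(Ioc τ.2.1 τ.2.2)}
  have hW : ε / 2 * (n : ℝ) ^ 3 ≤ #W := by
    have hcard : (#T : ℝ) ≤ #W + 2 * m * n ^ 2 := by
      exact_mod_cast card_le_card_filter_le_card_Ico_and_le_card_Ioc_add T
        (fun τ hτ => (mem_filter.1 hτ).2) m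
    linarith [mul_le_mul_of_nonneg_right hm_le (sq_nonneg (n : ℝ))]
  refine exists_precedes_le_card_indepTriples (m := m)
    ((filter_subset _ T).trans (filter_subset _ _)) (fun τ hτ => (mem_filter.1 hτ).2) ?_
  calc (n : ℝ) ^ 2 * (ε ^ 3 / 128 * n ^ 3) = ε / 2 * n ^ 3 * (ε / 8 * n) ^ 2 := by ring
    _ ≤ (#W * m ^ 2 : ℝ) := by gcongr

end LocallyFinite

theorem denseTriple_of_mul_card_pow_le {G : SimpleGraph V} {A B C : Finset V} {δ : ℝ}
    (hδ : 0 ≤ δ) (hAB : Precedes A B) (hBC : Precedes B C)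
    (h : δ * Fintype.card V ^ 3 ≤ #(indepTriples G A B C)) :
    DenseTriple G δ (δ * Fintype.card V) A B C := by
  have hABC : (#(indepTriples G A B C) : ℝ) ≤ #A * #B * #C := by
    exact_mod_cast card_indepTriples_le G A B C
  have hlarge {X Y Z : Finset V} (hXYZ : (#A * #B * #C : ℝ) = #X * (#Y * #Z)) :
      δ * Fintype.card V ≤ #X := by
    rcases (Nat.cast_nonneg (α := ℝ) (Fintype.card V)).eq_or_lt with hV | hV
    · simp [← hV]
    refine le_of_mul_le_mul_right ?_ (mul_pos hV hV)
    calc δ * Fintype.card V * (Fintype.card V * Fintype.card V)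
        = δ * Fintype.card V ^ 3 := by ring
      _ ≤ #X * (#Y * #Z) := hXYZ ▸ h.trans hABC
      _ ≤ #X * (Fintype.card V * Fintype.card V) := by
        gcongr
        exacts [card_le_univ Y, card_le_univ Z]
  refine ⟨hAB, hBC, hlarge (mul_assoc _ _ _), hlarge (X := B) (Y := A) (Z := C) (by ring),
    hlarge (X := C) (Y := A) (Z := B) (by ring), le_trans ?_ h⟩
  calc δ * (#A * #B * #C) ≤ δ * (Fintype.card V * Fintype.card V * Fintype.card V) := by
        gcongr
        exacts [card_le_univ A, card_le_univ B, card_le_univ C]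
    _ = δ * Fintype.card V ^ 3 := by ring

end CutPoints

theorem cliqueCount_compl_three_le {V : Type*} [LinearOrder V] [Fintype V] (G : SimpleGraph V) :
    cliqueCount Gᶜ 3 ≤
      #{τ ∈ indepTriples G univ univ univ | τ.1 < τ.2.1 ∧ τ.2.1 < τ.2.2} := by
  refine ((Set.ncard_le_ncard ?_ (finite_toSet _)).trans_eq (Set.ncard_coe_finset _)).trans
    (card_image_le (f := fun τ : V × V × V => ({τ.1, τ.2.1, τ.2.2} : Finset V)))
  rintro s ⟨hs, hclique⟩
  set e := s.orderEmbOfFin hs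
  have hlt {i j : Fin 3} (hij : i < j) : e i < e j := e.strictMono hij
  have hadj {i j : Fin 3} (hij : i < j) : ¬ G.Adj (e i) (e j) :=
    (SimpleGraph.compl_adj ..).1 (hclique (s.orderEmbOfFin_mem hs i) (s.orderEmbOfFin_mem hs j)
      (hlt hij).ne) |>.2
  refine mem_coe.2 (mem_image.2 ⟨(e 0, e 1, e 2), mem_filter.2 ⟨mem_indepTriples.2
    ⟨by simp, hadj (by decide), hadj (by decide), hadj (by decide)⟩,
    hlt (by decide), hlt (by decide)⟩, ?_⟩)
  calc {e 0, e 1, e 2} = univ.image e := by simp [Fin.univ_succ, image_insert]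
    _ = s := s.image_orderEmbOfFin_univ hs

theorem exists_denseTriple {V : Type*} [LinearOrder V] [Fintype V] [LocallyFiniteOrder V]
    {G : SimpleGraph V} {ε : ℝ} (hε : 0 < ε) (hV : 4 ≤ ε * Fintype.card V)
    (h : ε * Fintype.card V ^ 3 ≤ cliqueCount Gᶜ 3) :
    ∃ A B C : Finset V, DenseTriple G (ε ^ 3 / 128) (ε ^ 3 / 128 * Fintype.card V) A B C := by
  obtain ⟨A, B, C, hAB, hBC, hABC⟩ := exists_precedes_mul_card_pow_le_card_indepTriples hε hV
    (h.trans (Nat.cast_le.2 (cliqueCount_compl_three_le G)))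
  exact ⟨A, B, C, denseTriple_of_mul_card_pow_le (by positivity) hAB hBC hABC⟩

theorem holeFree_of_not_containsBlowup {V : Type*} [LinearOrder V] {G : SimpleGraph V} {t : ℕ}
    (h : ¬ ContainsBlowup Gᶜ 2 t) : HoleFree G t := by
  intro X Y hXY hX hY
  by_contra! hno
  obtain ⟨X', hX', hX't⟩ := exists_subset_card_eq hX
  obtain ⟨Y', hY', hY't⟩ := exists_subset_card_eq hY
  have hadj {x : V} (hx : x ∈ X') {y : V} (hy : y ∈ Y') : Gᶜ.Adj x y :=
    (SimpleGraph.compl_adj ..).2 ⟨(hXY (hX' hx) (hY' hy)).ne, hno x (hX' hx) y (hY' hy)⟩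
  have hdisj : Disjoint X' Y' := disjoint_left.2 fun x hx hy => (hadj hx hy).ne rfl
  refine h ⟨![X', Y'], ?_, ?_, ?_⟩
  · simp [Fin.forall_fin_two, hX't, hY't]
  · simp [Fin.forall_fin_two, hdisj, hdisj.symm]
  · simpa [Fin.forall_fin_two] using
      ⟨fun _ hx _ hy => hadj hx hy, fun _ hy _ hx => (hadj hx hy).symm⟩

theorem three_mul_clog_add_one_le {n : ℕ} (hn : 1 ≤ Real.log n) :
    (3 * Nat.clog 2 n + 1 : ℝ) ≤ 9 * Real.log n := by
  have hclog : (Nat.clog 2 n : ℝ) < Real.log n / Real.log 2 + 1 := by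
    rw [← Real.natCeil_logb_natCast, Real.log_div_log]
    refine Nat.ceil_lt_add_one (div_nonneg (by linarith) (Real.log_nonneg ?_))
    norm_num
  have hlog : Real.log n / Real.log 2 ≤ 5 / 3 * Real.log n := by
    rw [div_le_iff₀ (Real.log_pos one_lt_two)]
    nlinarith [Real.log_two_gt_d9]
  linarith

theorem tame_of_not_hasIndMonPath {n : ℕ} {G : SimpleGraph (Fin n)} {c : ℝ} (hc : 0 < c)
    (hn : 1 ≤ Real.log n) (hpath : ¬ HasIndMonPath G 5)
    (hblowup : ¬ ContainsBlowup Gᶜ 2 ⌈c * n / Real.log n⌉₊) :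
    Tame G (9 * (c * n + Real.log n)) where
  noPath a b c d e hab hbc hcd hde ab bc cd de ac ad ae bd be ce := by
    refine hpath ⟨![a, b, c, d, e], Fin.strictMono_iff_lt_succ.2 fun i => ?_, fun i j => ?_⟩
    · fin_cases i <;> assumption
    · fin_cases i <;> fin_cases j <;> simp [*, G.adj_comm]
  exists_holeFree := by
    have hn₀ : n ≠ 0 := by
      rintro rfl
      norm_num at hn
    have hlog : 0 < Real.log n := one_pos.trans_le hn
    refine ⟨_, Nat.one_le_ceil_iff.2 (by positivity), holeFree_of_not_containsBlowup hblowup, ?_⟩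
    rw [Fintype.card_fin]
    calc (3 * Nat.clog 2 n + 1 : ℝ) * ⌈c * n / Real.log n⌉₊
        ≤ 9 * Real.log n * (c * n / Real.log n + 1) :=
          mul_le_mul (three_mul_clog_add_one_le hn) (Nat.ceil_lt_add_one (by positivity)).le
            (Nat.cast_nonneg _) (by positivity)
      _ = 9 * (c * n + Real.log n) := by field_simp

theorem eventually_one_le_log_natCast_and_le {c : ℝ} (hc : 0 < c) :
    ∀ᶠ n : ℕ in Filter.atTop, 1 ≤ Real.log n ∧ Real.log n ≤ c * n := by
  have hlog : ∀ᶠ x : ℝ in Filter.atTop, 1 ≤ Real.log x ∧ Real.log x ≤ c * x := by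
    filter_upwards [Real.isLittleO_log_id_atTop.bound hc, Filter.eventually_ge_atTop 0,
      Real.tendsto_log_atTop.eventually_ge_atTop 1] with x hx hx0 hx1
    exact ⟨hx1, by simpa [abs_of_nonneg hx0] using (le_abs_self _).trans hx⟩
  exact tendsto_natCast_atTop_atTop.eventually hlog

end OrderedGraph

open OrderedGraph

theorem stmt_0 (ε : ℝ) (hε : 0 < ε) :
    ∃ c : ℝ, 0 < c ∧ ∃ n₀ : ℕ, ∀ n : ℕ, n₀ ≤ n →
      ∀ G : SimpleGraph (Fin n),
        ¬ HasIndMonPath G 5 →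
        ε * (n : ℝ) ^ 3 ≤ (cliqueCount Gᶜ 3 : ℝ) →
        ContainsBlowup Gᶜ 2 ⌈c * (n : ℝ) / Real.log n⌉₊ := by
  obtain ⟨κ, hκ, hdense⟩ := Tame.exists_not_denseTriple.{0} (ε ^ 3 / 128) (by positivity)
  set c := κ * (ε ^ 3 / 128) / 18
  have hc : 0 < c := by positivity
  have hlarge : ∀ᶠ n : ℕ in Filter.atTop, 4 / ε ≤ n :=
    tendsto_natCast_atTop_atTop.eventually_ge_atTop _
  obtain ⟨n₀, hn₀⟩ := Filter.eventually_atTop.1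
    ((eventually_one_le_log_natCast_and_le hc).and hlarge)
  refine ⟨c, hc, n₀, fun n hn G hpath hcliques => ?_⟩
  obtain ⟨⟨hlog_ge, hlog_le⟩, hεn⟩ := hn₀ n hn
  by_contra hblowup
  obtain ⟨A, B, C, hABC⟩ := exists_denseTriple (G := G) hε
    (by rwa [Fintype.card_fin, ← div_le_iff₀' hε]) (by rwa [Fintype.card_fin])
  refine hdense (tame_of_not_hasIndMonPath hc hlog_ge hpath hblowup) ?_ hABC
  rw [Fintype.card_fin]
  calc 9 * (c * n + Real.log n) ≤ 9 * (c * n + c * n) := by gcongr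
    _ = κ * (ε ^ 3 / 128 * n) := by ring
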